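/- arXiv:2404.07311 — 3 statements merged into one kernel-verified Lean document; each statement's English description precedes it below -/
import Mathlib

section
/- For every 1 ≤ ℓ ≤ q−1, det(I + P + Q_ℓ) = 1 − μ·2q/(q−1) − μ²·4q(q−2)/(q−1)². -/
open MeasureTheory ProbabilityTheory Real Finset Matrix

noncomputable section

/-- `α_i ∈ ℝ^q` (1-based `i` and 1-based coordinate index as in the paper). -/
def alphaVec (q i : ℕ) : Fin q → ℝ :=
  fun k => (Real.sqrt ((i : ℝ) * ((i : ℝ) + 1)))⁻¹ *
    (if (k : ℕ) + 1 < i + 1 then 1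
     else if (k : ℕ) + 1 = i + 1 then -(i : ℝ)
     else 0)

/-- `ω_{m,ℓ} = α_{m,ℓ}` for `1 ≤ m ≤ q−2` and `ω_{m,ℓ} = 0` for `m ∈ {q−1, q}`
(the index `m : Fin q` encodes the paper's 1-based index `m+1`). -/
def omegaVec (q : ℕ) (l : Fin q) : Fin q → ℝ :=
  fun m => if (m : ℕ) < q - 2 then alphaVec q ((m : ℕ) + 1) l else 0

/-- The matrix `Q_ℓ` with entries
`Q_{ℓ,mm'} = μ ω_{m,ℓ} ω_{m',ℓ} + √μ √(1+μq/(q−1)) (ω_{m,ℓ} δ_{m',q−1} + ω_{m',ℓ} δ_{m,q−1})`. -/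
def Qmat (q : ℕ) (μ : ℝ) (l : Fin q) : Matrix (Fin q) (Fin q) ℝ :=
  Matrix.of fun m m' =>
    μ * omegaVec q l m * omegaVec q l m'
    + Real.sqrt μ * Real.sqrt (1 + μ * (q : ℝ) / ((q : ℝ) - 1)) *
      (omegaVec q l m * (if (m' : ℕ) + 1 = q - 1 then 1 else 0)
        + omegaVec q l m' * (if (m : ℕ) + 1 = q - 1 then 1 else 0))

/-- The matrix `P` with entries `P_{mm'} = (1+μq/(q−1))⁻¹` times:
`μq/(q−1)` if `m=m'=q`; `−μq/(q−1)(2+μq/(q−1))` if `m=m'=q−1`;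
`√μ √(q/(q−1))` if `{m,m'} = {q−1,q}`; `0` otherwise. -/
def Pmat (q : ℕ) (μ : ℝ) : Matrix (Fin q) (Fin q) ℝ :=
  Matrix.of fun m m' =>
    (1 + μ * (q : ℝ) / ((q : ℝ) - 1))⁻¹ *
      (if (m : ℕ) + 1 = q ∧ (m' : ℕ) + 1 = q then μ * (q : ℝ) / ((q : ℝ) - 1)
       else if (m : ℕ) + 1 = q - 1 ∧ (m' : ℕ) + 1 = q - 1 then
         -(μ * (q : ℝ) / ((q : ℝ) - 1)) * (2 + μ * (q : ℝ) / ((q : ℝ) - 1))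
       else if ((m : ℕ) + 1 = q ∧ (m' : ℕ) + 1 = q - 1) ∨
               ((m : ℕ) + 1 = q - 1 ∧ (m' : ℕ) + 1 = q) then
         Real.sqrt μ * Real.sqrt ((q : ℝ) / ((q : ℝ) - 1))
       else 0)

theorem aux_sum (l N : ℕ) :
    ∑ m ∈ Finset.range N, ((1 / (((m : ℝ) + 1) * ((m : ℝ) + 2))) *
      (if l < m + 1 then (1 : ℝ) else if l = m + 1 then ((m : ℝ) + 1) ^ 2 else 0))
      = if l ≤ N then (N : ℝ) / ((N : ℝ) + 1) else 0 := by
  induction N with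
  | zero => simp
  | succ N ih =>
    rw [Finset.sum_range_succ, ih]
    have h1 : (N : ℝ) + 1 ≠ 0 := by positivity
    have h2 : (N : ℝ) + 2 ≠ 0 := by positivity
    have h3 : (N : ℝ) + 1 + 1 ≠ 0 := by positivity
    rcases lt_trichotomy l (N + 1) with h | h | h
    · rw [if_pos (by omega), if_pos h, if_pos (by omega)]
      push_cast
      field_simp
      ring
    · rw [if_neg (by omega), if_neg (by omega), if_pos h, if_pos (by omega)]
      push_cast
      field_simp
      ring
    · rw [if_neg (by omega), if_neg (by omega), if_neg (by omega), if_neg (by omega)]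
      simp

theorem aux_alpha_sq (q m : ℕ) (l : Fin q) :
    alphaVec q (m + 1) l ^ 2 = ((1 / (((m : ℝ) + 1) * ((m : ℝ) + 2))) *
      (if (l : ℕ) < m + 1 then (1 : ℝ) else if (l : ℕ) = m + 1 then ((m : ℝ) + 1) ^ 2 else 0)) := by
  unfold alphaVec
  have h : (0 : ℝ) ≤ ((m + 1 : ℕ) : ℝ) * (((m + 1 : ℕ) : ℝ) + 1) := by positivity
  rw [mul_pow, inv_pow, Real.sq_sqrt h]
  congr 1
  · push_cast
    rw [one_div]
    congr 1
    ring
  · simp only [add_lt_add_iff_right, add_left_inj]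
    split_ifs <;> push_cast <;> ring

theorem aux_det (n : ℕ) (v : Fin n → ℝ) (μ c a b d : ℝ) (h : 1 + μ * (v ⬝ᵥ v) ≠ 0) :
    (Matrix.fromBlocks (1 + Matrix.of fun i j => μ * v i * v j)
      (Matrix.of fun i j => ![c * v i, 0] j) (Matrix.of fun i j => ![c * v j, 0] i)
      !![a, b; b, d]).det
      = (1 + μ * (v ⬝ᵥ v)) * (a * d - b * b) - c ^ 2 * (v ⬝ᵥ v) * d := by
  set w := v ⬝ᵥ v with hw
  have hA : (1 + Matrix.of fun i j => μ * v i * v j : Matrix (Fin n) (Fin n) ℝ)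
      = 1 + Matrix.replicateCol Unit (μ • v) * Matrix.replicateRow Unit v := by
    ext i j
    simp [Matrix.mul_apply]
    ring
  have hS : ∀ t : ℝ, ∑ k, t * (v k * v k) = t * w := by
    intro t
    rw [hw, dotProduct, Finset.mul_sum]
  have hdA : (1 + Matrix.of fun i j => μ * v i * v j : Matrix (Fin n) (Fin n) ℝ).det
      = 1 + μ * w := by
    rw [hA, Matrix.det_one_add_replicateCol_mul_replicateRow]
    simp [hw]
  set A := (1 + Matrix.of fun i j => μ * v i * v j : Matrix (Fin n) (Fin n) ℝ) with hAdef
  set B : Matrix (Fin n) (Fin 2) ℝ := Matrix.of fun i j => ![c * v i, 0] j with hB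
  set C : Matrix (Fin 2) (Fin n) ℝ := Matrix.of fun i j => ![c * v j, 0] i with hC
  let X : Matrix (Fin n) (Fin 2) ℝ := Matrix.of fun i j => ![c / (1 + μ * w) * v i, 0] j
  have hX : A * X = B := by
    rw [hAdef, Matrix.add_mul, Matrix.one_mul]
    ext i j
    fin_cases j
    · have : ∑ k, μ * v i * v k * (c / (1 + μ * w) * v k)
          = μ * v i * (c / (1 + μ * w)) * w := by
        refine Eq.trans ?_ (hS _)
        exact Finset.sum_congr rfl fun k _ => by ring
      simp [Matrix.mul_apply, X, hB, this]
      field_simp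
    · simp [Matrix.mul_apply, X, hB]
  have hCX : C * X = !![c ^ 2 * w / (1 + μ * w), 0; 0, 0] := by
    ext i j
    fin_cases i <;> fin_cases j
    · have : ∑ k, c * v k * (c / (1 + μ * w) * v k) = c * (c / (1 + μ * w)) * w := by
        refine Eq.trans ?_ (hS _)
        exact Finset.sum_congr rfl fun k _ => by ring
      simp [Matrix.mul_apply, X, hC, this]
      ring
    all_goals simp [Matrix.mul_apply, X, hC]
  have key : Matrix.fromBlocks A B C !![a, b; b, d] * Matrix.fromBlocks 1 (-X) 0 1
      = Matrix.fromBlocks A 0 C (!![a, b; b, d] - C * X) := by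
    rw [Matrix.fromBlocks_multiply]
    simp [hX, sub_eq_add_neg, add_comm]
  have := congrArg Matrix.det key
  rw [Matrix.det_mul, Matrix.det_fromBlocks_zero₂₁, Matrix.det_fromBlocks_zero₁₂, hdA, hCX] at this
  simp only [Matrix.det_one, mul_one] at this
  rw [this, Matrix.det_fin_two]
  simp
  field_simp
  ring

/-- third determinant in the Proposition of the paper.
For every `1 ≤ ℓ ≤ q−1`,
`det(I + P + Q_ℓ) = 1 − 2μq/(q−1) − 4μ²q(q−2)/(q−1)²`. -/
theorem det_I_add_P_add_Q
    (q : ℕ) (hq : 2 ≤ q) (μ : ℝ) (hμ : 0 < μ)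
    (l : Fin q) (hl : (l : ℕ) < q - 1) :
    (1 + Pmat q μ + Qmat q μ l).det
      = 1 - μ * (2 * (q : ℝ)) / ((q : ℝ) - 1)
        - μ ^ 2 * (4 * (q : ℝ) * ((q : ℝ) - 2)) / ((q : ℝ) - 1) ^ 2 := by
  obtain ⟨n, rfl⟩ : ∃ n, q = n + 2 := ⟨q - 2, by omega⟩
  set v : Fin n → ℝ := fun i => alphaVec (n + 2) ((i : ℕ) + 1) l with hv
  have hn1 : (n : ℝ) + 1 ≠ 0 := by positivity
  have hw : v ⬝ᵥ v = (n : ℝ) / ((n : ℝ) + 1) := by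
    have h1 : v ⬝ᵥ v = ∑ i : Fin n, alphaVec (n + 2) ((i : ℕ) + 1) l ^ 2 := by
      simp [dotProduct, hv, sq]
    rw [h1, Finset.sum_range (fun i => alphaVec (n + 2) (i + 1) l ^ 2) |>.symm]
    simp only [aux_alpha_sq]
    rw [aux_sum, if_pos (by omega)]
  have hq1 : ((n + 2 : ℕ) : ℝ) - 1 = (n : ℝ) + 1 := by push_cast; ring
  set a : ℝ := μ * ((n + 2 : ℕ) : ℝ) / (((n + 2 : ℕ) : ℝ) - 1) with ha
  have ha0 : 0 < a := by rw [ha, hq1]; positivity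
  set b : ℝ := √μ * √(((n + 2 : ℕ) : ℝ) / (((n + 2 : ℕ) : ℝ) - 1)) with hb
  have hbb : b * b = a := by
    rw [hb, ← Real.sqrt_mul hμ.le, Real.mul_self_sqrt]
    · rw [ha]; ring
    · rw [hq1]; positivity
  set c : ℝ := √μ * √(1 + a) with hc
  have hcc : c ^ 2 = μ * (1 + a) := by
    rw [hc, mul_pow, Real.sq_sqrt hμ.le, Real.sq_sqrt (by positivity)]
  have ha' : μ * ((n : ℝ) + 2) / ((n : ℝ) + 2 - 1) = a := by rw [ha]; push_cast; rfl
  have hb' : √μ * √(((n : ℝ) + 2) / ((n : ℝ) + 2 - 1)) = b := by rw [hb]; push_cast; rfl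
  have hM : (1 + Pmat (n + 2) μ + Qmat (n + 2) μ l).submatrix finSumFinEquiv finSumFinEquiv
      = Matrix.fromBlocks (1 + Matrix.of fun i j => μ * v i * v j)
      (Matrix.of fun i j => ![c * v i, 0] j) (Matrix.of fun i j => ![c * v j, 0] i)
      !![1 + (1 + a)⁻¹ * (-a * (2 + a)), (1 + a)⁻¹ * b; (1 + a)⁻¹ * b, 1 + (1 + a)⁻¹ * a] := by
    ext i j
    rcases i with i | i <;> rcases j with j | j
    · have hi := i.2
      have hj := j.2
      have e2 : ¬ ((i : ℕ) = n) := by omega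
      have e3 : ¬ ((j : ℕ) = n) := by omega
      have e4 : ¬ ((i : ℕ) = n + 1) := by omega
      simp [Pmat, Qmat, omegaVec, Matrix.one_apply, e2, e3, e4, hv]
    · have hi := i.2
      have e2 : ¬ ((i : ℕ) = n) := by omega
      have e4 : ¬ ((i : ℕ) = n + 1) := by omega
      have e5 : Fin.castAdd 2 i ≠ Fin.natAdd n j := by
        intro h
        have := congrArg Fin.val h
        simp at this
        omega
      fin_cases j <;>
      simp [Pmat, Qmat, omegaVec, Matrix.one_apply, e2, e4, hv, ha', ← hc] <;> exact e5
    · have hi := j.2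
      have e2 : ¬ ((j : ℕ) = n) := by omega
      have e4 : ¬ ((j : ℕ) = n + 1) := by omega
      have e5 : ¬ (n = (j : ℕ)) := by omega
      have e6 : ¬ (n + 1 = (j : ℕ)) := by omega
      fin_cases i <;>
      simp [Pmat, Qmat, omegaVec, Matrix.one_apply, e2, e4, e5, e6, hv, ha', ← hc, Fin.ext_iff]
    · fin_cases i <;> fin_cases j <;>
      simp [Pmat, Qmat, omegaVec, Matrix.one_apply, ha', hb', Fin.ext_iff]
  rw [← Matrix.det_submatrix_equiv_self finSumFinEquiv, hM, aux_det, hw, hcc]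
  · have h1 : (1 + a)⁻¹ * b * ((1 + a)⁻¹ * b) = (1 + a)⁻¹ * (1 + a)⁻¹ * a := by
      rw [← hbb]; ring
    have h2 : 1 + a ≠ 0 := by positivity
    have h3 : 1 - μ * (2 * ((n + 2 : ℕ) : ℝ)) / (((n + 2 : ℕ) : ℝ) - 1)
        - μ ^ 2 * (4 * ((n + 2 : ℕ) : ℝ) * (((n + 2 : ℕ) : ℝ) - 2)) / (((n + 2 : ℕ) : ℝ) - 1) ^ 2
        = 1 - 2 * a - 4 * a * (μ * ((n : ℝ) / ((n : ℝ) + 1))) := by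
      rw [ha, hq1]; push_cast; field_simp; ring
    rw [h1, h3]
    clear_value a
    generalize (n : ℝ) / ((n : ℝ) + 1) = w
    field_simp
    ring
  · rw [hw]; positivity

end
end

section
/- For every 1 ≤ ℓ, ℓ' ≤ q−1 with ℓ ≠ ℓ' (so q ≥ 3), det(I + Q_ℓ + Q_{ℓ'}) = 1 + μ·2/(q−1) − μ²·(3q−1)(q−3)/(q−1)² − μ³·2q(q−3)/(q−1)². -/
open MeasureTheory ProbabilityTheory Real Finset Matrix

noncomputable section

def helmertF (m k : ℕ) : ℝ :=
  (Real.sqrt (((m : ℝ) + 1) * ((m : ℝ) + 1 + 1)))⁻¹ *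
    (if k < m + 1 then 1 else if k = m + 1 then -((m : ℝ) + 1) else 0)

lemma helmertF_sum (n : ℕ) : ∀ i j : ℕ, i ≤ n → j ≤ n →
    ∑ m ∈ Finset.range n, helmertF m i * helmertF m j
      = (if i = j then 1 else 0) - 1 / ((n : ℝ) + 1) := by
  have hz : ∀ n j : ℕ, ∑ m ∈ Finset.range n, helmertF m (n+1) * helmertF m j = 0 := by
    intro n j
    apply Finset.sum_eq_zero
    intro m hm
    rw [Finset.mem_range] at hm
    have h1 : ¬ (n + 1 < m + 1) := by omega
    have h2 : ¬ (n + 1 = m + 1) := by omega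
    simp only [helmertF, if_neg h1, if_neg h2, mul_zero, zero_mul]
  have hz' : ∀ n j : ℕ, ∑ m ∈ Finset.range n, helmertF m j * helmertF m (n+1) = 0 := by
    intro n j
    rw [← hz n j]
    exact Finset.sum_congr rfl fun m _ => mul_comm _ _
  induction n with
  | zero =>
    intro i j hi hj
    obtain rfl : i = 0 := by omega
    obtain rfl : j = 0 := by omega
    simp
  | succ n ih =>
    intro i j hi hj
    rw [Finset.sum_range_succ]
    have hp : (0:ℝ) < (n:ℝ) + 1 := by positivity
    have hp2 : (0:ℝ) < (n:ℝ) + 1 + 1 := by positivity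
    have key : ∀ x y : ℝ, (Real.sqrt (((n : ℝ) + 1) * ((n : ℝ) + 1 + 1)))⁻¹ * x *
        ((Real.sqrt (((n : ℝ) + 1) * ((n : ℝ) + 1 + 1)))⁻¹ * y)
        = x * y / (((n : ℝ) + 1) * ((n : ℝ) + 1 + 1)) := by
      intro x y
      have h := Real.mul_self_sqrt (show 0 ≤ ((n : ℝ) + 1) * ((n : ℝ) + 1 + 1) by positivity)
      rw [div_eq_mul_inv, ← h, mul_inv]
      rw [h]
      ring
    have e : helmertF n i * helmertF n j = _ := key _ _
    rw [e]
    push_cast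
    rcases Nat.lt_or_ge i (n+1) with h1 | h1 <;> rcases Nat.lt_or_ge j (n+1) with h2 | h2
    · rw [ih i j (by omega) (by omega), if_pos h1, if_pos h2]
      field_simp
      ring
    · obtain rfl : j = n + 1 := by omega
      rw [hz', if_pos h1, if_neg (lt_irrefl _), if_pos rfl, if_neg (by omega)]
      field_simp
      ring
    · obtain rfl : i = n + 1 := by omega
      rw [hz, if_pos h2, if_neg (lt_irrefl _), if_pos rfl, if_neg (by omega)]
      field_simp
      ring
    · obtain rfl : j = n + 1 := by omega
      obtain rfl : i = n + 1 := by omega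
      rw [hz, if_neg (lt_irrefl _), if_pos rfl, if_pos rfl]
      field_simp
      ring

lemma omegaVec_dot (n : ℕ) (l l' : Fin (n+2)) (hl : (l : ℕ) ≤ n) (hl' : (l' : ℕ) ≤ n) :
    ∑ m, omegaVec (n+2) l m * omegaVec (n+2) l' m
      = (if l = l' then 1 else 0) - 1 / ((n : ℝ) + 1) := by
  have h : ∀ m : Fin (n+2), omegaVec (n+2) l m * omegaVec (n+2) l' m
      = (fun k : ℕ => if k < n then helmertF k l * helmertF k l' else 0) m := by
    intro m
    simp only [omegaVec, alphaVec, helmertF, Nat.add_sub_cancel]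
    split_ifs <;> (try omega) <;> push_cast <;> (try simp) <;> (try ring)
  rw [Finset.sum_congr rfl (fun m _ => h m), 
    Fin.sum_univ_eq_sum_range (fun k : ℕ => if k < n then helmertF k l * helmertF k l' else 0) (n+2),
    Finset.sum_range_succ,
    Finset.sum_range_succ, if_neg (by omega), if_neg (by omega), add_zero, add_zero,
    Finset.sum_congr rfl (fun k hk => if_pos (Finset.mem_range.1 hk)), helmertF_sum n _ _ hl hl']
  simp only [Fin.ext_iff]

def eVec (q : ℕ) : Fin q → ℝ := fun m => if (m : ℕ) + 1 = q - 1 then 1 else 0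

lemma omega_e (q : ℕ) (l : Fin q) : ∑ m, omegaVec q l m * eVec q m = 0 := by
  apply Finset.sum_eq_zero
  intro m _
  simp only [omegaVec, eVec]
  split_ifs <;> first | omega | simp

lemma e_e (n : ℕ) : ∑ m, eVec (n+2) m * eVec (n+2) m = 1 := by
  have h : ∀ m : Fin (n+2), eVec (n+2) m * eVec (n+2) m
      = if m = ⟨n, by omega⟩ then 1 else 0 := by
    intro m
    simp only [eVec, Fin.ext_iff]
    split_ifs <;> first | omega | simp
  rw [Finset.sum_congr rfl (fun m _ => h m)]
  simp

lemma det_rank_three {q : ℕ} (a b e : Fin q → ℝ) (μ c s t : ℝ)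
    (haa : ∑ m, a m * a m = s) (hbb : ∑ m, b m * b m = s) (hab : ∑ m, a m * b m = t)
    (hae : ∑ m, a m * e m = 0) (hbe : ∑ m, b m * e m = 0) (hee : ∑ m, e m * e m = 1)
    (M : Matrix (Fin q) (Fin q) ℝ)
    (hM : ∀ i j, M i j = (1 : Matrix (Fin q) (Fin q) ℝ) i j + (μ * a i * a j + c * (a i * e j + a j * e i))
      + (μ * b i * b j + c * (b i * e j + b j * e i))) :
    M.det = (1 + μ * (s - t)) * (1 + μ * (s + t) - 2 * c ^ 2 * (s + t)) := by
  let U : Matrix (Fin q) (Fin 3) ℝ := Matrix.of fun i => ![a i, b i, e i]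
  let V : Matrix (Fin 3) (Fin q) ℝ :=
    Matrix.of ![fun j => μ * a j + c * e j, fun j => μ * b j + c * e j, fun j => c * (a j + b j)]
  have h1 : M = 1 + U * V := by
    ext i j
    rw [hM, Matrix.add_apply, Matrix.mul_apply, Fin.sum_univ_three]
    simp [U, V]
    ring
  have hba : ∑ m, b m * a m = t := by rw [← hab]; exact Finset.sum_congr rfl fun _ _ => mul_comm _ _
  have hea : ∑ m, e m * a m = 0 := by rw [← hae]; exact Finset.sum_congr rfl fun _ _ => mul_comm _ _
  have heb : ∑ m, e m * b m = 0 := by rw [← hbe]; exact Finset.sum_congr rfl fun _ _ => mul_comm _ _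
  have h2 : V * U = !![μ * s, μ * t, c; μ * t, μ * s, c; c * (s + t), c * (s + t), 0] := by
    ext i j
    rw [Matrix.mul_apply]
    fin_cases i <;> fin_cases j <;>
      simp [U, V, add_mul, mul_add, mul_assoc, Finset.sum_add_distrib, ← Finset.mul_sum,
        haa, hbb, hab, hba, hae, hbe, hea, heb, hee] <;> (try ring)
  rw [h1, Matrix.det_one_add_mul_comm, h2, Matrix.det_fin_three]
  simp
  ring

/-- fourth determinant in the Proposition of the paper.
For every `1 ≤ ℓ, ℓ' ≤ q−1` with `ℓ ≠ ℓ'` (so `q ≥ 3`),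
`det(I + Q_ℓ + Q_{ℓ'}) = 1 + 2μ/(q−1) − μ²(3q−1)(q−3)/(q−1)² − 2μ³q(q−3)/(q−1)²`. -/
theorem det_I_add_Q_add_Q
    (q : ℕ) (hq : 3 ≤ q) (μ : ℝ) (hμ : 0 < μ)
    (l l' : Fin q) (hl : (l : ℕ) < q - 1) (hl' : (l' : ℕ) < q - 1) (hne : l ≠ l') :
    (1 + Qmat q μ l + Qmat q μ l').det
      = 1 + μ * 2 / ((q : ℝ) - 1)
        - μ ^ 2 * ((3 * (q : ℝ) - 1) * ((q : ℝ) - 3)) / ((q : ℝ) - 1) ^ 2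
        - μ ^ 3 * (2 * (q : ℝ) * ((q : ℝ) - 3)) / ((q : ℝ) - 1) ^ 2 := by
  obtain ⟨n, rfl⟩ : ∃ n, q = n + 2 := ⟨q - 2, by omega⟩
  have hn : (0:ℝ) < (n:ℝ) + 1 := by positivity
  have hq1 : ((n + 2 : ℕ) : ℝ) - 1 = (n:ℝ) + 1 := by push_cast; ring
  have hc : (Real.sqrt μ * Real.sqrt (1 + μ * ((n + 2 : ℕ) : ℝ) / (((n + 2 : ℕ) : ℝ) - 1))) ^ 2
      = μ * (1 + μ * ((n + 2 : ℕ) : ℝ) / (((n + 2 : ℕ) : ℝ) - 1)) := by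
    rw [mul_pow, Real.sq_sqrt hμ.le, Real.sq_sqrt]
    rw [hq1]; positivity
  have hs := omegaVec_dot n l l (by omega) (by omega)
  have hs' := omegaVec_dot n l' l' (by omega) (by omega)
  have ht := omegaVec_dot n l l' (by omega) (by omega)
  rw [if_pos rfl] at hs hs'
  rw [if_neg hne] at ht
  rw [det_rank_three (omegaVec (n+2) l) (omegaVec (n+2) l') (eVec (n+2)) μ
    (Real.sqrt μ * Real.sqrt (1 + μ * ((n + 2 : ℕ) : ℝ) / (((n + 2 : ℕ) : ℝ) - 1))) _ _
    hs hs' ht (omega_e _ _) (omega_e _ _) (e_e n) (1 + Qmat (n+2) μ l + Qmat (n+2) μ l') (fun i j => rfl), hc, hq1]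
  push_cast
  field_simp
  ring

end
end

section
/- Regarding 𝒵_1 and 𝒵_2 as functions of μ (with q, n fixed), there exist constants C > 0 and δ ∈ (0,1) such that for all μ ∈ (0,δ): | 𝒵_1 + n·μ/(q−1) | ≤ C·μ² and | 𝒵_2 − (n/2)·μ/(q(q−1)) | ≤ C·μ²; that is, 𝒵_1 = −(n/(q−1))·μ + O(μ²) and 𝒵_2 = ((n/2)/(q(q−1)))·μ + O(μ²) as μ → 0⁺. -/
open MeasureTheory ProbabilityTheory Real Finset Matrix

noncomputable section

/-- The quadratic form `âᵀAâ = Σ_{m,m'} A_{mm'} a_m·a_{m'}` on `(ℝⁿ)^q`. -/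
def quadForm (q n : ℕ) (A : Matrix (Fin q) (Fin q) ℝ) (a : Fin q → Fin n → ℝ) : ℝ :=
  ∑ m : Fin q, ∑ m' : Fin q, A m m' * ∑ i, a m i * a m' i

/-- `Z(â) = 1 − q⁻¹ Σ_{ℓ=1}^{q−1} exp(−½ âᵀQ_ℓâ) − q⁻¹ exp(−½ âᵀPâ)`. -/
def Zfun (q n : ℕ) (μ : ℝ) (a : Fin q → Fin n → ℝ) : ℝ :=
  1 - (1 / (q : ℝ)) * ∑ l ∈ Finset.univ.filter (fun l : Fin q => (l : ℕ) < q - 1),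
        Real.exp (-(1 / 2) * quadForm q n (Qmat q μ l) a)
    - (1 / (q : ℝ)) * Real.exp (-(1 / 2) * quadForm q n (Pmat q μ) a)

/-- The law of `â` where all `nq` real components are i.i.d. standard normal. -/
def stdGaussPi (q n : ℕ) : Measure (Fin q → Fin n → ℝ) :=
  Measure.pi fun _ : Fin q => Measure.pi fun _ : Fin n => gaussianReal 0 1

/-- `𝒵_k = (1/k)·E_a[Z^k]`. -/
def calZ (q n : ℕ) (μ : ℝ) (k : ℕ) : ℝ :=
  (1 / (k : ℝ)) * ∫ a : Fin q → Fin n → ℝ, (Zfun q n μ a) ^ k ∂(stdGaussPi q n)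

lemma exp_taylor_abs (x : ℝ) (n : ℕ) :
    |Real.exp x - ∑ m ∈ Finset.range n, x ^ m / (m.factorial : ℝ)| ≤ |x| ^ n * Real.exp |x| := by
  have h := Complex.norm_exp_sub_sum_le_norm_mul_exp (x : ℂ) n
  have e : Complex.exp (x : ℂ) - ∑ m ∈ Finset.range n, (x : ℂ) ^ m / (m.factorial : ℂ)
      = ((Real.exp x - ∑ m ∈ Finset.range n, x ^ m / (m.factorial : ℝ) : ℝ) : ℂ) := by
    push_cast; rfl
  rw [e, Complex.norm_real, Complex.norm_real] at h
  simpa [Real.norm_eq_abs] using h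

lemma abs_half_add_le {f g b : ℝ} (hf : |f| ≤ b) (hg : |g| ≤ b) : |(f + g) / 2| ≤ b := by
  rw [abs_le] at *
  constructor <;> linarith

lemma abs_half_sub_le {f g b : ℝ} (hf : |f| ≤ b) (hg : |g| ≤ b) : |(f - g) / 2| ≤ b := by
  rw [abs_le] at *
  constructor <;> linarith

lemma pw_aux (s B x y : ℝ) (hs : 0 ≤ s) (hB : 1 ≤ B)
    (hx : |x| ≤ s ^ 2 * B) (hy : |y| ≤ s * B) (hex : Real.exp |x| ≤ B) (hey : Real.exp |y| ≤ B) :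
    |Real.exp (-x) * Real.cosh y - 1 + x - y ^ 2 / 2| ≤ 3 * s ^ 4 * B ^ 5 ∧
    |Real.exp (-x) * Real.sinh y - y| ≤ 2 * s ^ 3 * B ^ 4 := by
  have hB0 : 0 ≤ B := by linarith
  have e2x := exp_taylor_abs (-x) 2
  have e1x := exp_taylor_abs (-x) 1
  have e4y := exp_taylor_abs y 4
  have e4y' := exp_taylor_abs (-y) 4
  have e3y := exp_taylor_abs y 3
  have e3y' := exp_taylor_abs (-y) 3
  have e2y := exp_taylor_abs y 2
  have e2y' := exp_taylor_abs (-y) 2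
  have e1y := exp_taylor_abs y 1
  have e1y' := exp_taylor_abs (-y) 1
  rw [abs_neg] at e2x e1x e4y' e3y' e2y' e1y'
  have ymul : ∀ k : ℕ, |y| ^ k * Real.exp |y| ≤ (s * B) ^ k * B := fun k => by gcongr
  have xmul : ∀ k : ℕ, |x| ^ k * Real.exp |x| ≤ (s ^ 2 * B) ^ k * B := fun k => by gcongr
  replace e2x := e2x.trans (xmul 2)
  replace e1x := e1x.trans (xmul 1)
  replace e4y := e4y.trans (ymul 4)
  replace e4y' := e4y'.trans (ymul 4)
  replace e3y := e3y.trans (ymul 3)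
  replace e3y' := e3y'.trans (ymul 3)
  replace e2y := e2y.trans (ymul 2)
  replace e2y' := e2y'.trans (ymul 2)
  replace e1y := e1y.trans (ymul 1)
  replace e1y' := e1y'.trans (ymul 1)
  simp only [Finset.sum_range_succ, Finset.sum_range_zero, Nat.factorial] at e2x e1x e4y e4y' e3y e3y' e2y e2y' e1y e1y'
  norm_num at e2x e1x e4y e4y' e3y e3y' e2y e2y' e1y e1y'
  have c4 : |Real.cosh y - 1 - y ^ 2 / 2| ≤ (s * B) ^ 4 * B := by
    convert abs_half_add_le e4y e4y' using 2
    rw [Real.cosh_eq]; ring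
  have c2 : |Real.cosh y - 1| ≤ (s * B) ^ 2 * B := by
    convert abs_half_add_le e2y e2y' using 2
    rw [Real.cosh_eq]; ring
  have c0 : |Real.cosh y| ≤ B := by
    rw [abs_of_pos (Real.cosh_pos y), ← Real.cosh_abs]
    have : Real.cosh |y| ≤ Real.exp |y| := by
      rw [Real.cosh_eq]
      have : Real.exp (-|y|) ≤ Real.exp |y| := Real.exp_le_exp.2 (by linarith [abs_nonneg y])
      linarith
    linarith
  have s3 : |Real.sinh y - y| ≤ (s * B) ^ 3 * B := by
    convert abs_half_sub_le e3y e3y' using 2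
    rw [Real.sinh_eq]; ring
  have s1 : |Real.sinh y| ≤ (s * B) * B := by
    convert abs_half_sub_le e1y e1y' using 2
    rw [Real.sinh_eq]; ring
  have a2 : |Real.exp (-x) - 1 + x| ≤ (s ^ 2 * B) ^ 2 * B := by
    rw [show Real.exp (-x) - 1 + x = Real.exp (-x) - (1 + -x) by ring]
    linarith
  have a1 : |Real.exp (-x) - 1| ≤ (s ^ 2 * B) * B := by linarith
  have hB45 : B ^ 4 ≤ B ^ 5 := pow_le_pow_right₀ hB (by norm_num)
  constructor
  · rw [show Real.exp (-x) * Real.cosh y - 1 + x - y ^ 2 / 2 =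
      (Real.exp (-x) - 1 + x) * Real.cosh y + (Real.cosh y - 1 - y ^ 2 / 2)
        - x * (Real.cosh y - 1) by ring]
    calc _ ≤ |Real.exp (-x) - 1 + x| * |Real.cosh y| + |Real.cosh y - 1 - y ^ 2 / 2|
        + |x| * |Real.cosh y - 1| := by
          rw [← abs_mul, ← abs_mul]
          exact (abs_sub _ _).trans (add_le_add_left (abs_add_le _ _) _)
      _ ≤ ((s ^ 2 * B) ^ 2 * B) * B + (s * B) ^ 4 * B + (s ^ 2 * B) * ((s * B) ^ 2 * B) := by
          gcongr
      _ = s ^ 4 * (2 * B ^ 4 + B ^ 5) := by ring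
      _ ≤ s ^ 4 * (3 * B ^ 5) := by gcongr; linarith
      _ = _ := by ring
  · rw [show Real.exp (-x) * Real.sinh y - y =
      (Real.exp (-x) - 1) * Real.sinh y + (Real.sinh y - y) by ring]
    calc _ ≤ |Real.exp (-x) - 1| * |Real.sinh y| + |Real.sinh y - y| := by
          rw [← abs_mul]; exact abs_add_le _ _
      _ ≤ ((s ^ 2 * B) * B) * ((s * B) * B) + (s * B) ^ 3 * B := by gcongr
      _ = _ := by ring

/-- averaging over `q` indices preserves bounds -/
lemma avg_abs_le (q : ℕ) (hq : 2 ≤ q) (f : Fin q → ℝ) (b : ℝ) (h : ∀ j, |f j| ≤ b) :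
    |(1 / (q : ℝ)) * ∑ j, f j| ≤ b := by
  have hq0 : (0 : ℝ) < q := by exact_mod_cast (by omega : 0 < q)
  rw [abs_mul, abs_of_pos (by positivity)]
  have : |∑ j, f j| ≤ q * b := by
    refine (Finset.abs_sum_le_sum_abs _ _).trans ((Finset.sum_le_sum fun j _ => h j).trans ?_)
    simp
  calc _ ≤ (1 / (q : ℝ)) * (q * b) := by gcongr
    _ = b := by field_simp

/-- generic form of `Z` -/
def Zgen (q : ℕ) (e p : Fin q → ℝ) : ℝ :=
  (1 / (q : ℝ)) * ∑ j, (1 - Real.exp (-(1 / 2) * (e j + p j)))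

lemma Zgen_bounds (q : ℕ) (hq : 2 ≤ q) (e p : Fin q → ℝ) (s B : ℝ) (hs : 0 ≤ s) (hs1 : s ≤ 1)
    (hB : 1 ≤ B) (he : ∀ j, |e j| ≤ 2 * (s ^ 2 * B)) (hp : ∀ j, |p j| ≤ 2 * (s * B))
    (hee : ∀ j, Real.exp |e j / 2| ≤ B) (hpe : ∀ j, Real.exp |p j / 2| ≤ B) :
    |(Zgen q e p + Zgen q e (-p)) / 2 - (1 / (q : ℝ)) * ∑ j, (e j / 2 - p j ^ 2 / 8)|
      ≤ 3 * s ^ 4 * B ^ 5 ∧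
    |(Zgen q e p ^ 2 + Zgen q e (-p) ^ 2) / 2 - ((1 / (q : ℝ)) * ∑ j, p j / 2) ^ 2|
      ≤ 40 * s ^ 4 * B ^ 10 ∧
    |(1 / (q : ℝ)) * ∑ j, (e j / 2 - p j ^ 2 / 8)| ≤ 2 * B ^ 10 ∧
    |((1 / (q : ℝ)) * ∑ j, p j / 2) ^ 2| ≤ B ^ 10 ∧
    |Zgen q e p| ≤ 2 * B ^ 10 ∧ |Zgen q e p ^ 2| ≤ 4 * B ^ 10 := by
  have hq0 : (0 : ℝ) < q := by exact_mod_cast (by omega : 0 < q)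
  have hx : ∀ j, |e j / 2| ≤ s ^ 2 * B := fun j => by
    rw [abs_div, abs_of_pos (by norm_num : (0 : ℝ) < 2)]; linarith [he j]
  have hy : ∀ j, |p j / 2| ≤ s * B := fun j => by
    rw [abs_div, abs_of_pos (by norm_num : (0 : ℝ) < 2)]; linarith [hp j]
  have key := fun j => pw_aux s B (e j / 2) (p j / 2) hs hB (hx j) (hy j) (hee j) (hpe j)
  set D : ℝ := (1 / (q : ℝ)) * ∑ j, (1 - Real.exp (-(e j / 2)) * Real.cosh (p j / 2)) with hD
  set O : ℝ := (1 / (q : ℝ)) * ∑ j, (Real.exp (-(e j / 2)) * Real.sinh (p j / 2)) with hO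
  set L : ℝ := (1 / (q : ℝ)) * ∑ j, p j / 2 with hL
  set A : ℝ := (1 / (q : ℝ)) * ∑ j, (e j / 2 - p j ^ 2 / 8) with hA
  have hz1 : Zgen q e p = D + O := by
    rw [hD, hO, ← mul_add, ← Finset.sum_add_distrib, Zgen]
    congr 1
    refine Finset.sum_congr rfl fun j _ => ?_
    rw [show -(1 / 2) * (e j + p j) = -(e j / 2) + -(p j / 2) by ring, Real.exp_add,
      ← Real.cosh_sub_sinh (p j / 2)]
    ring
  have hz2 : Zgen q e (-p) = D - O := by
    rw [hD, hO, ← mul_sub, ← Finset.sum_sub_distrib, Zgen]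
    congr 1
    refine Finset.sum_congr rfl fun j _ => ?_
    rw [Pi.neg_apply, show -(1 / 2) * (e j + -p j) = -(e j / 2) + (p j / 2) by ring, Real.exp_add,
      ← Real.cosh_add_sinh (p j / 2)]
    ring
  have hB0 : 0 ≤ B := by linarith
  have bDA : |D - A| ≤ 3 * s ^ 4 * B ^ 5 := by
    rw [hD, hA, ← mul_sub, ← Finset.sum_sub_distrib]
    refine avg_abs_le q hq _ _ fun j => ?_
    rw [← abs_neg]
    refine le_trans (le_of_eq ?_) (key j).1
    congr 1; ring
  have bOL : |O - L| ≤ 2 * s ^ 3 * B ^ 4 := by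
    rw [hO, hL, ← mul_sub, ← Finset.sum_sub_distrib]
    exact avg_abs_le q hq _ _ fun j => (key j).2
  have bL : |L| ≤ s * B := avg_abs_le q hq _ _ hy
  have hp1 : ∀ i j : ℕ, i ≤ j → B ^ i ≤ B ^ j := fun i j h => pow_le_pow_right₀ hB h
  have hs' : ∀ i j : ℕ, i ≤ j → s ^ j ≤ s ^ i := fun i j h => pow_le_pow_of_le_one hs hs1 h
  have bA : |A| ≤ 2 * s ^ 2 * B ^ 2 := by
    refine avg_abs_le q hq _ _ fun j => ?_
    have h1 : |p j / 2| ^ 2 ≤ (s * B) ^ 2 := by gcongr; exact hy j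
    rw [sq_abs] at h1
    have h2 := hx j
    have h3 := hp1 1 2 (by norm_num)
    have h4 : s ^ 2 * B ≤ s ^ 2 * B ^ 2 := by gcongr; simpa using h3
    rw [abs_le] at h2 ⊢
    constructor <;> nlinarith [sq_nonneg (p j)]
  have bD : |D| ≤ 5 * s ^ 2 * B ^ 5 := by
    have : |D| ≤ |D - A| + |A| := by simpa using abs_add_le (D - A) A
    have h1 : 3 * s ^ 4 * B ^ 5 ≤ 3 * s ^ 2 * B ^ 5 := by gcongr 3 * ?_ * _; exact hs' 2 4 (by norm_num)
    have h2 : 2 * s ^ 2 * B ^ 2 ≤ 2 * s ^ 2 * B ^ 5 := by gcongr 2 * s ^ 2 * ?_; exact hp1 2 5 (by norm_num)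
    nlinarith
  have bOL2 : |O + L| ≤ 4 * s * B ^ 4 := by
    have : |O + L| ≤ |O - L| + 2 * |L| := by
      have := abs_add_le (O - L) (2 * L)
      rw [abs_mul, abs_of_pos (by norm_num : (0 : ℝ) < 2)] at this
      rwa [show O - L + 2 * L = O + L by ring] at this
    have h1 : 2 * s ^ 3 * B ^ 4 ≤ 2 * s * B ^ 4 := by
      gcongr 2 * ?_ * _; simpa using hs' 1 3 (by norm_num)
    have h2 : s * B ≤ s * B ^ 4 := by gcongr s * ?_; simpa using hp1 1 4 (by norm_num)
    nlinarith
  have bD2 : D ^ 2 ≤ 25 * s ^ 4 * B ^ 10 := by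
    rw [← sq_abs]
    calc |D| ^ 2 ≤ (5 * s ^ 2 * B ^ 5) ^ 2 := by gcongr
      _ = _ := by ring
  have bO2 : |O ^ 2 - L ^ 2| ≤ 8 * s ^ 4 * B ^ 10 := by
    rw [sq_sub_sq, abs_mul]
    calc |O + L| * |O - L| ≤ (4 * s * B ^ 4) * (2 * s ^ 3 * B ^ 4) := by gcongr
      _ = 8 * s ^ 4 * B ^ 8 := by ring
      _ ≤ _ := by gcongr 8 * s ^ 4 * ?_; exact hp1 8 10 (by norm_num)
  have bZ : |Zgen q e p| ≤ 2 * B ^ 2 := by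
    refine avg_abs_le q hq _ _ fun j => ?_
    have h1 : Real.exp (-(1 / 2) * (e j + p j)) ≤ B ^ 2 := by
      calc _ ≤ Real.exp (|e j / 2| + |p j / 2|) := by
            refine Real.exp_le_exp.2 ?_
            have h1 := neg_abs_le (e j / 2)
            have h2 := neg_abs_le (p j / 2)
            linarith
        _ = Real.exp |e j / 2| * Real.exp |p j / 2| := Real.exp_add _ _
        _ ≤ B * B := by gcongr; exact hee j; exact hpe j
        _ = _ := by ring
    have h0 := Real.exp_pos (-(1 / 2) * (e j + p j))
    have h3 : 1 ≤ B ^ 2 := one_le_pow₀ hB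
    rw [abs_le]; constructor <;> linarith
  refine ⟨?_, ?_, ?_, ?_, ?_, ?_⟩
  · rw [hz1, hz2, show (D + O + (D - O)) / 2 - A = D - A by ring]; exact bDA
  · rw [hz1, hz2, show ((D + O) ^ 2 + (D - O) ^ 2) / 2 - L ^ 2 = D ^ 2 + (O ^ 2 - L ^ 2) by ring]
    have := abs_add_le (D ^ 2) (O ^ 2 - L ^ 2)
    rw [abs_of_nonneg (sq_nonneg D)] at this
    have h0 : 0 ≤ s ^ 4 * B ^ 10 := by positivity
    nlinarith
  · refine bA.trans ?_
    have h2 : s ^ 2 ≤ 1 := pow_le_one₀ hs hs1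
    calc 2 * s ^ 2 * B ^ 2 ≤ 2 * 1 * B ^ 10 := by
          gcongr ?_ * ?_
          · linarith
          · exact hp1 2 10 (by norm_num)
      _ = _ := by ring
  · rw [abs_pow]
    calc |L| ^ 2 ≤ (s * B) ^ 2 := by gcongr
      _ ≤ (1 * B) ^ 2 := by gcongr
      _ = B ^ 2 := by ring
      _ ≤ _ := hp1 2 10 (by norm_num)
  · refine bZ.trans ?_
    gcongr 2 * ?_; exact hp1 2 10 (by norm_num)
  · rw [abs_pow]
    calc |Zgen q e p| ^ 2 ≤ (2 * B ^ 2) ^ 2 := by gcongr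
      _ = 4 * B ^ 4 := by ring
      _ ≤ _ := by gcongr 4 * ?_; exact hp1 4 10 (by norm_num)

lemma integrable_exp_sq_gauss :
    Integrable (fun x : ℝ => Real.exp (x ^ 2 / 4)) (gaussianReal 0 1) := by
  rw [gaussianReal_of_var_ne_zero _ one_ne_zero,
    integrable_withDensity_iff (measurable_gaussianPDF 0 1)
      (Filter.Eventually.of_forall fun x => by simp [gaussianPDF])]
  have h := (integrable_exp_neg_mul_sq (b := 1 / 4) (by norm_num)).const_mul (√(2 * π * (1 : NNReal)))⁻¹
  refine h.congr (Filter.Eventually.of_forall fun x => ?_)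
  simp only [gaussianPDF]
  rw [ENNReal.toReal_ofReal (gaussianPDFReal_nonneg _ _ _), gaussianPDFReal]
  rw [mul_comm (Real.exp (x ^ 2 / 4)), mul_assoc _ (Real.exp _) (Real.exp _), ← Real.exp_add]
  congr 2
  simp
  ring

/-- squared norm -/
def Nsq (q n : ℕ) (a : Fin q → Fin n → ℝ) : ℝ := ∑ m, ∑ i, a m i ^ 2

instance (q n : ℕ) : IsProbabilityMeasure (stdGaussPi q n) := by
  unfold stdGaussPi; infer_instance

lemma integrable_exp_Nsq (q n : ℕ) :
    Integrable (fun a => Real.exp (Nsq q n a / 4)) (stdGaussPi q n) := by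
  have h : Integrable (fun a : Fin q → Fin n → ℝ => ∏ m, (fun v : Fin n → ℝ => ∏ i, Real.exp ((v i) ^ 2 / 4)) (a m))
      (stdGaussPi q n) := by
    unfold stdGaussPi
    refine Integrable.fintype_prod (f := fun _ : Fin q => fun v : Fin n → ℝ => ∏ i, Real.exp ((v i) ^ 2 / 4))
      fun _ => ?_
    exact Integrable.fintype_prod (f := fun _ : Fin n => fun x : ℝ => Real.exp (x ^ 2 / 4))
      fun _ => integrable_exp_sq_gauss
  refine h.congr (Filter.Eventually.of_forall fun a => ?_)
  simp only [Nsq, ← Real.exp_sum, Finset.sum_div]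

/-- moments -/
def gMom (d : ℕ) : ℝ := ∫ x : ℝ, x ^ d ∂(gaussianReal 0 1)

lemma gMom_zero : gMom 0 = 1 := by simp [gMom]
lemma gMom_one : gMom 1 = 0 := by simp [gMom]
lemma gMom_two : gMom 2 = 1 := by
  have h := variance_id_gaussianReal (μ := 0) (v := 1)
  rw [variance_of_integral_eq_zero (by fun_prop) (by simp)] at h
  simpa [gMom] using h

lemma integral_monomial (q n : ℕ) (d : Fin q × Fin n → ℕ) :
    ∫ a, ∏ x : Fin q × Fin n, a x.1 x.2 ^ d x ∂(stdGaussPi q n) = ∏ x, gMom (d x) := by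
  simp_rw [Fintype.prod_prod_type]
  unfold stdGaussPi
  rw [integral_fintype_prod_eq_prod (f := fun (m : Fin q) (v : Fin n → ℝ) => ∏ i, v i ^ d (m, i))]
  refine Finset.prod_congr rfl fun m _ => ?_
  rw [integral_fintype_prod_eq_prod (f := fun (i : Fin n) (v : ℝ) => v ^ d (m, i))]
  rfl

lemma coord_eq_prod (q n : ℕ) (a : Fin q → Fin n → ℝ) (m : Fin q) (i : Fin n) :
    a m i = ∏ x : Fin q × Fin n, a x.1 x.2 ^ (if (m, i) = x then 1 else 0) := by
  rw [Finset.prod_pow_boole]; simp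

lemma integral_two (q n : ℕ) (m m' : Fin q) (i : Fin n) :
    ∫ a, a m i * a m' i ∂(stdGaussPi q n) = if m = m' then 1 else 0 := by
  have : ∀ a : Fin q → Fin n → ℝ, a m i * a m' i = ∏ x : Fin q × Fin n, a x.1 x.2 ^
      ((if (m, i) = x then 1 else 0) + (if (m', i) = x then 1 else 0)) := fun a => by
    simp_rw [pow_add, Finset.prod_mul_distrib, ← coord_eq_prod]
  simp_rw [this]
  rw [integral_monomial]
  split_ifs with h
  · subst h
    refine Finset.prod_eq_one fun x _ => ?_
    split_ifs <;> simp [gMom_zero, gMom_two]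
  · refine Finset.prod_eq_zero (Finset.mem_univ (m, i)) ?_
    simp [Ne.symm h, gMom_one]

lemma integral_four (q n : ℕ) (k m m' : Fin q) (hm : m ≠ k) (hm' : m' ≠ k) (i i' : Fin n) :
    ∫ a, (a m i * a k i) * (a m' i' * a k i') ∂(stdGaussPi q n)
      = if m = m' ∧ i = i' then 1 else 0 := by
  have : ∀ a : Fin q → Fin n → ℝ, (a m i * a k i) * (a m' i' * a k i')
      = ∏ x : Fin q × Fin n, a x.1 x.2 ^
      (((if (m, i) = x then 1 else 0) + (if (k, i) = x then 1 else 0)) +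
        ((if (m', i') = x then 1 else 0) + (if (k, i') = x then 1 else 0))) := fun a => by
    simp_rw [pow_add, Finset.prod_mul_distrib, ← coord_eq_prod]
  simp_rw [this]
  rw [integral_monomial]
  split_ifs with h
  · obtain ⟨rfl, rfl⟩ := h
    refine Finset.prod_eq_one fun x _ => ?_
    by_cases h1 : (m, i) = x
    · subst h1; simp [hm.symm, gMom_two]
    · by_cases h2 : (k, i) = x
      · subst h2; simp [hm, gMom_two]
      · simp [h1, h2, gMom_zero]
  · by_cases hi : i = i'
    · subst hi
      have hne : m' ≠ m := fun h' => h ⟨h'.symm, rfl⟩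
      refine Finset.prod_eq_zero (Finset.mem_univ (m, i)) ?_
      simp [hne, hm.symm, gMom_one]
    · refine Finset.prod_eq_zero (Finset.mem_univ (k, i)) ?_
      simp [hm, hm', Ne.symm hi, gMom_one]

lemma abs_coord_le (q n : ℕ) (a : Fin q → Fin n → ℝ) (m : Fin q) (i : Fin n) :
    a m i ^ 2 ≤ Nsq q n a := by
  unfold Nsq
  refine le_trans ?_ (Finset.single_le_sum (f := fun m => ∑ i, a m i ^ 2)
    (fun m _ => Finset.sum_nonneg fun i _ => sq_nonneg _) (Finset.mem_univ m))
  exact Finset.single_le_sum (f := fun i => a m i ^ 2) (fun i _ => sq_nonneg _) (Finset.mem_univ i)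

lemma Nsq_nonneg (q n : ℕ) (a : Fin q → Fin n → ℝ) : 0 ≤ Nsq q n a :=
  Finset.sum_nonneg fun m _ => Finset.sum_nonneg fun i _ => sq_nonneg _

lemma continuous_Nsq (q n : ℕ) : Continuous (Nsq q n) := by
  unfold Nsq; fun_prop

/-- domination criterion -/
lemma integrable_of_dom (q n : ℕ) (f : (Fin q → Fin n → ℝ) → ℝ) (hf : Continuous f) (C : ℝ)
    (h : ∀ a, |f a| ≤ C * Real.exp (Nsq q n a / 4)) : Integrable f (stdGaussPi q n) :=
  ((integrable_exp_Nsq q n).const_mul C).mono' hf.aestronglyMeasurable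
    (Filter.Eventually.of_forall h)

lemma integrable_two (q n : ℕ) (m m' : Fin q) (i : Fin n) :
    Integrable (fun a => a m i * a m' i) (stdGaussPi q n) := by
  refine integrable_of_dom q n _ (by fun_prop) 4 fun a => ?_
  have h1 := abs_coord_le q n a m i
  have h2 := abs_coord_le q n a m' i
  have h3 := Real.add_one_le_exp (Nsq q n a / 4)
  rw [abs_le]
  constructor <;> nlinarith [sq_nonneg (a m i + a m' i), sq_nonneg (a m i - a m' i)]

lemma integrable_four (q n : ℕ) (m m' k k' : Fin q) (i i' : Fin n) :
    Integrable (fun a => (a m i * a k i) * (a m' i' * a k' i')) (stdGaussPi q n) := by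
  refine integrable_of_dom q n _ (by fun_prop) 64 fun a => ?_
  have h1 := abs_coord_le q n a m i
  have h2 := abs_coord_le q n a m' i'
  have h1' := abs_coord_le q n a k i
  have h2' := abs_coord_le q n a k' i'
  have h3 := Real.quadratic_le_exp_of_nonneg (x := Nsq q n a / 4)
    (by have := Nsq_nonneg q n a; positivity)
  have hN := Nsq_nonneg q n a
  have b1 : |a m i * a k i| ≤ Nsq q n a := by
    rw [abs_le]
    constructor <;> nlinarith [sq_nonneg (a m i + a k i), sq_nonneg (a m i - a k i)]
  have b2 : |a m' i' * a k' i'| ≤ Nsq q n a := by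
    rw [abs_le]
    constructor <;> nlinarith [sq_nonneg (a m' i' + a k' i'), sq_nonneg (a m' i' - a k' i')]
  rw [abs_mul]
  have := mul_le_mul b1 b2 (abs_nonneg _) hN
  nlinarith

/-- linear combination of the vectors -/
def lc (q n : ℕ) (w : Fin q → ℝ) (a : Fin q → Fin n → ℝ) (i : Fin n) : ℝ := ∑ m, w m * a m i
def SS (q n : ℕ) (w : Fin q → ℝ) (a : Fin q → Fin n → ℝ) : ℝ := ∑ i, lc q n w a i ^ 2
def UU (q n : ℕ) (w : Fin q → ℝ) (k : Fin q) (a : Fin q → Fin n → ℝ) : ℝ :=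
  ∑ i, lc q n w a i * a k i

lemma SS_eq (q n : ℕ) (w : Fin q → ℝ) (a : Fin q → Fin n → ℝ) :
    SS q n w a = ∑ i, ∑ m, ∑ m', (w m * w m') * (a m i * a m' i) := by
  unfold SS lc
  refine Finset.sum_congr rfl fun i _ => ?_
  rw [sq, Finset.sum_mul_sum]
  refine Finset.sum_congr rfl fun m _ => Finset.sum_congr rfl fun m' _ => by ring

lemma UU_sq_eq (q n : ℕ) (w : Fin q → ℝ) (k : Fin q) (a : Fin q → Fin n → ℝ) :
    UU q n w k a ^ 2 = ∑ i, ∑ i', ∑ m, ∑ m',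
      (w m * w m') * ((a m i * a k i) * (a m' i' * a k i')) := by
  unfold UU lc
  rw [sq, Finset.sum_mul_sum]
  refine Finset.sum_congr rfl fun i _ => Finset.sum_congr rfl fun i' _ => ?_
  rw [mul_mul_mul_comm, Finset.sum_mul_sum, Finset.sum_mul]
  refine Finset.sum_congr rfl fun m _ => ?_
  rw [Finset.sum_mul]
  refine Finset.sum_congr rfl fun m' _ => by ring

lemma integrable_SS (q n : ℕ) (w : Fin q → ℝ) : Integrable (SS q n w) (stdGaussPi q n) := by
  have : SS q n w = fun a => ∑ i, ∑ m, ∑ m', (w m * w m') * (a m i * a m' i) :=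
    funext (SS_eq q n w)
  rw [this]
  exact integrable_finsetSum _ fun i _ => integrable_finsetSum _ fun m _ =>
    integrable_finsetSum _ fun m' _ => (integrable_two q n m m' i).const_mul _

lemma integral_SS (q n : ℕ) (w : Fin q → ℝ) :
    ∫ a, SS q n w a ∂(stdGaussPi q n) = n * ∑ m, w m ^ 2 := by
  simp_rw [SS_eq]
  rw [integral_finsetSum _ fun i _ => integrable_finsetSum _ fun m _ =>
    integrable_finsetSum _ fun m' _ => (integrable_two q n m m' i).const_mul _]
  have : ∀ i : Fin n, ∫ a, ∑ m, ∑ m', (w m * w m') * (a m i * a m' i) ∂(stdGaussPi q n)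
      = ∑ m, w m ^ 2 := fun i => by
    rw [integral_finsetSum _ fun m _ =>
      integrable_finsetSum _ fun m' _ => (integrable_two q n m m' i).const_mul _]
    refine Finset.sum_congr rfl fun m _ => ?_
    rw [integral_finsetSum _ fun m' _ => (integrable_two q n m m' i).const_mul _]
    simp_rw [integral_const_mul, integral_two]
    simp [sq]
  simp [this]

lemma integrable_UU_sq (q n : ℕ) (w : Fin q → ℝ) (k : Fin q) :
    Integrable (fun a => UU q n w k a ^ 2) (stdGaussPi q n) := by
  simp_rw [UU_sq_eq]
  exact integrable_finsetSum _ fun i _ => integrable_finsetSum _ fun i' _ =>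
    integrable_finsetSum _ fun m _ =>
    integrable_finsetSum _ fun m' _ => (integrable_four q n m m' k k i i').const_mul _

lemma integral_UU_sq (q n : ℕ) (w : Fin q → ℝ) (k : Fin q) (hk : w k = 0) :
    ∫ a, UU q n w k a ^ 2 ∂(stdGaussPi q n) = n * ∑ m, w m ^ 2 := by
  simp_rw [UU_sq_eq]
  rw [integral_finsetSum _ fun i _ => integrable_finsetSum _ fun i' _ =>
    integrable_finsetSum _ fun m _ =>
    integrable_finsetSum _ fun m' _ => (integrable_four q n m m' k k i i').const_mul _]
  have : ∀ i i' : Fin n, ∫ a, ∑ m, ∑ m', (w m * w m') * ((a m i * a k i) * (a m' i' * a k i'))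
      ∂(stdGaussPi q n) = if i = i' then ∑ m, w m ^ 2 else 0 := fun i i' => by
    rw [integral_finsetSum _ fun m _ =>
      integrable_finsetSum _ fun m' _ => (integrable_four q n m m' k k i i').const_mul _]
    have h2 : ∀ m, ∫ a, ∑ m', (w m * w m') * ((a m i * a k i) * (a m' i' * a k i'))
        ∂(stdGaussPi q n) = if i = i' then w m ^ 2 else 0 := fun m => by
      rw [integral_finsetSum _ fun m' _ => (integrable_four q n m m' k k i i').const_mul _]
      simp_rw [integral_const_mul]
      have h3 : ∀ m', (w m * w m') * ∫ a, (a m i * a k i) * (a m' i' * a k i') ∂(stdGaussPi q n)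
          = if m = m' then (if i = i' then w m ^ 2 else 0) else 0 := fun m' => by
        by_cases hm : m = k
        · subst hm; simp [hk]
        by_cases hm' : m' = k
        · subst hm'; simp [hk, hm]
        rw [integral_four q n k m m' hm hm']
        by_cases h : m = m'
        · subst h
          by_cases hi : i = i' <;> simp [hi, sq]
        · simp [h]
      simp [h3]
    simp_rw [h2]
    by_cases hi : i = i' <;> simp [hi]
  have h4 : ∀ i : Fin n, ∫ a, ∑ i', ∑ m, ∑ m', (w m * w m') * ((a m i * a k i) * (a m' i' * a k i'))
      ∂(stdGaussPi q n) = ∑ m, w m ^ 2 := fun i => by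
    rw [integral_finsetSum _ fun i' _ => integrable_finsetSum _ fun m _ =>
      integrable_finsetSum _ fun m' _ => (integrable_four q n m m' k k i i').const_mul _]
    simp [this]
  simp [h4]

lemma SS_nonneg (q n : ℕ) (w : Fin q → ℝ) (a : Fin q → Fin n → ℝ) : 0 ≤ SS q n w a :=
  Finset.sum_nonneg fun i _ => sq_nonneg _

lemma SS_le (q n : ℕ) (w : Fin q → ℝ) (a : Fin q → Fin n → ℝ) :
    SS q n w a ≤ (∑ m, w m ^ 2) * Nsq q n a := by
  unfold SS Nsq lc
  rw [Finset.sum_comm, Finset.mul_sum]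
  exact Finset.sum_le_sum fun i _ => Finset.sum_mul_sq_le_sq_mul_sq _ _ _

lemma UU_le (q n : ℕ) (w : Fin q → ℝ) (k : Fin q) (a : Fin q → Fin n → ℝ) :
    |UU q n w k a| ≤ ((∑ m, w m ^ 2) + 1) / 2 * Nsq q n a := by
  have h1 := SS_le q n w a
  have h2 : ∑ i, a k i ^ 2 ≤ Nsq q n a :=
    Finset.single_le_sum (f := fun m => ∑ i, a m i ^ 2)
      (fun m _ => Finset.sum_nonneg fun i _ => sq_nonneg _) (Finset.mem_univ k)
  have h3 : |UU q n w k a| ≤ ∑ i, (lc q n w a i ^ 2 + a k i ^ 2) / 2 := by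
    refine (Finset.abs_sum_le_sum_abs _ _).trans (Finset.sum_le_sum fun i _ => ?_)
    rw [abs_le]
    constructor <;> nlinarith [sq_nonneg (lc q n w a i + a k i), sq_nonneg (lc q n w a i - a k i)]
  rw [← Finset.sum_div, Finset.sum_add_distrib] at h3
  unfold SS at h1
  linarith

/-- flip the sign of the `k`th vector -/
def flipk (q n : ℕ) (k : Fin q) (a : Fin q → Fin n → ℝ) : Fin q → Fin n → ℝ :=
  fun m i => if m = k then -(a m i) else a m i

lemma mp_flip (q n : ℕ) (k : Fin q) :
    MeasurePreserving (flipk q n k) (stdGaussPi q n) (stdGaussPi q n) := by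
  have h0 : MeasurePreserving (fun x : ℝ => -x) (gaussianReal 0 1) (gaussianReal 0 1) :=
    ⟨by fun_prop, by rw [gaussianReal_map_neg]; simp⟩
  have h1 : ∀ m : Fin q, MeasurePreserving
      (fun v : Fin n → ℝ => fun i => if m = k then -(v i) else v i)
      (Measure.pi fun _ : Fin n => gaussianReal 0 1) (Measure.pi fun _ : Fin n => gaussianReal 0 1) := by
    intro m
    by_cases h : m = k
    · simp only [h, if_true]
      exact measurePreserving_pi (f := fun _ : Fin n => fun x : ℝ => -x) _ _ fun _ => h0
    · simp only [h, if_false]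
      exact MeasurePreserving.id _
  exact measurePreserving_pi (f := fun (m : Fin q) (v : Fin n → ℝ) (i : Fin n) =>
    if m = k then -(v i) else v i) _ _ h1

lemma integral_flip (q n : ℕ) (k : Fin q) (f : (Fin q → Fin n → ℝ) → ℝ) (hf : Continuous f) :
    ∫ a, f (flipk q n k a) ∂(stdGaussPi q n) = ∫ a, f a ∂(stdGaussPi q n) := by
  have h := mp_flip q n k
  conv_rhs => rw [← h.map_eq]
  rw [integral_map h.measurable.aemeasurable hf.aestronglyMeasurable]

lemma lc_flip (q n : ℕ) (w : Fin q → ℝ) (k : Fin q) (hk : w k = 0) (a : Fin q → Fin n → ℝ) :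
    lc q n w (flipk q n k a) = lc q n w a := by
  funext i
  unfold lc flipk
  refine Finset.sum_congr rfl fun m _ => ?_
  by_cases h : m = k
  · subst h; simp [hk]
  · simp [h]

lemma SS_flip (q n : ℕ) (w : Fin q → ℝ) (k : Fin q) (hk : w k = 0) (a : Fin q → Fin n → ℝ) :
    SS q n w (flipk q n k a) = SS q n w a := by
  unfold SS; rw [lc_flip q n w k hk]

lemma lc_single (q n : ℕ) (k : Fin q) (a : Fin q → Fin n → ℝ) (i : Fin n) :
    lc q n (Pi.single k 1) a i = a k i := by
  simp [lc, Pi.single_apply]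

lemma SS_flip_single (q n : ℕ) (k : Fin q) (a : Fin q → Fin n → ℝ) :
    SS q n (Pi.single k 1) (flipk q n k a) = SS q n (Pi.single k 1) a := by
  simp [SS, lc_single, flipk]

lemma UU_flip (q n : ℕ) (w : Fin q → ℝ) (k : Fin q) (hk : w k = 0) (a : Fin q → Fin n → ℝ) :
    UU q n w k (flipk q n k a) = - UU q n w k a := by
  unfold UU; rw [lc_flip q n w k hk]; simp [flipk]

lemma continuous_SS (q n : ℕ) (w : Fin q → ℝ) : Continuous (SS q n w) := by
  unfold SS lc; fun_prop

lemma continuous_UU (q n : ℕ) (w : Fin q → ℝ) (k : Fin q) : Continuous (UU q n w k) := by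
  unfold UU lc; fun_prop

/-- index `q-1` of the paper -/
def kI (q : ℕ) (hq : 2 ≤ q) : Fin q := ⟨q - 2, by omega⟩
/-- index `q` of the paper -/
def lI (q : ℕ) (hq : 2 ≤ q) : Fin q := ⟨q - 1, by omega⟩

lemma kI_ne_lI (q : ℕ) (hq : 2 ≤ q) : kI q hq ≠ lI q hq := by
  simp [kI, lI, Fin.ext_iff]; omega

lemma eq_kI (q : ℕ) (hq : 2 ≤ q) (m : Fin q) : ((m : ℕ) + 1 = q - 1) ↔ m = kI q hq := by
  simp [kI, Fin.ext_iff]; omega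

lemma eq_lI (q : ℕ) (hq : 2 ≤ q) (m : Fin q) : ((m : ℕ) + 1 = q) ↔ m = lI q hq := by
  simp [lI, Fin.ext_iff]; omega

lemma SS_D (q n : ℕ) (w : Fin q → ℝ) (a : Fin q → Fin n → ℝ) :
    ∑ m, ∑ m', (w m * w m') * ∑ i, a m i * a m' i = SS q n w a := by
  simp_rw [SS_eq, Finset.mul_sum]
  conv_rhs => rw [Finset.sum_comm]
  refine Finset.sum_congr rfl fun m _ => ?_
  conv_rhs => rw [Finset.sum_comm]

lemma UU_D (q n : ℕ) (w : Fin q → ℝ) (k : Fin q) (a : Fin q → Fin n → ℝ) :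
    ∑ m, w m * ∑ i, a m i * a k i = UU q n w k a := by
  unfold UU lc
  simp_rw [Finset.mul_sum, Finset.sum_mul]
  rw [Finset.sum_comm]
  simp_rw [mul_assoc]

lemma quadForm_Q (q n : ℕ) (hq : 2 ≤ q) (μ : ℝ) (l : Fin q) (a : Fin q → Fin n → ℝ) :
    quadForm q n (Qmat q μ l) a = μ * SS q n (omegaVec q l) a +
      Real.sqrt μ * (2 * Real.sqrt (1 + μ * (q : ℝ) / ((q : ℝ) - 1))) *
        UU q n (omegaVec q l) (kI q hq) a := by
  unfold quadForm Qmat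
  simp only [Matrix.of_apply, eq_kI q hq]
  set r := Real.sqrt (1 + μ * (q : ℝ) / ((q : ℝ) - 1))
  set D : Fin q → Fin q → ℝ := fun m m' => ∑ i, a m i * a m' i with hD
  have hsym : ∀ m m', D m m' = D m' m := fun m m' => by
    simp only [hD]; exact Finset.sum_congr rfl fun i _ => mul_comm _ _
  have hS : ∑ m, ∑ m', (omegaVec q l m * omegaVec q l m') * D m m' = SS q n (omegaVec q l) a :=
    SS_D q n _ a
  have hU : ∑ m, omegaVec q l m * D m (kI q hq) = UU q n (omegaVec q l) (kI q hq) a :=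
    UU_D q n _ _ a
  have h1 : ∑ m, ∑ m', (omegaVec q l m * (if m' = kI q hq then 1 else 0)) * D m m'
      = UU q n (omegaVec q l) (kI q hq) a := by
    rw [← hU]; simp
  have h2 : ∑ m, ∑ m', (omegaVec q l m' * (if m = kI q hq then 1 else 0)) * D m m'
      = UU q n (omegaVec q l) (kI q hq) a := by
    rw [Finset.sum_comm, ← h1]
    refine Finset.sum_congr rfl fun m _ => Finset.sum_congr rfl fun m' _ => by rw [hsym]
  calc _ = ∑ m, ∑ m', (μ * ((omegaVec q l m * omegaVec q l m') * D m m') +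
        (Real.sqrt μ * r) * ((omegaVec q l m * (if m' = kI q hq then 1 else 0)) * D m m') +
        (Real.sqrt μ * r) * ((omegaVec q l m' * (if m = kI q hq then 1 else 0)) * D m m')) := by
        refine Finset.sum_congr rfl fun m _ => Finset.sum_congr rfl fun m' _ => ?_
        simp only [hD]; ring
    _ = _ := by
        simp_rw [Finset.sum_add_distrib, ← Finset.mul_sum]
        rw [hS, h1, h2]; ring

lemma quadForm_P (q n : ℕ) (hq : 2 ≤ q) (μ : ℝ) (a : Fin q → Fin n → ℝ) :
    quadForm q n (Pmat q μ) a = 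
      μ * ((1 + μ * ((q : ℝ) / ((q : ℝ) - 1)))⁻¹ * ((q : ℝ) / ((q : ℝ) - 1))
          * SS q n (Pi.single (lI q hq) 1) a
        - (1 + μ * ((q : ℝ) / ((q : ℝ) - 1)))⁻¹ * ((q : ℝ) / ((q : ℝ) - 1))
          * (2 + μ * ((q : ℝ) / ((q : ℝ) - 1))) * SS q n (Pi.single (kI q hq) 1) a) +
      Real.sqrt μ * (2 * (1 + μ * ((q : ℝ) / ((q : ℝ) - 1)))⁻¹ * Real.sqrt ((q : ℝ) / ((q : ℝ) - 1))) *
        UU q n (Pi.single (lI q hq) 1) (kI q hq) a := by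
  unfold quadForm Pmat
  simp only [Matrix.of_apply, eq_kI q hq, eq_lI q hq, mul_div_assoc]
  set c0 := (q : ℝ) / ((q : ℝ) - 1)
  set k := kI q hq
  set l := lI q hq
  have hkl : k ≠ l := kI_ne_lI q hq
  set D : Fin q → Fin q → ℝ := fun m m' => ∑ i, a m i * a m' i with hD
  have hsym : ∀ m m', D m m' = D m' m := fun m m' => by
    simp only [hD]; exact Finset.sum_congr rfl fun i _ => mul_comm _ _
  have hSl : SS q n (Pi.single l 1) a = D l l := by simp [SS, lc_single, hD, sq]
  have hSk : SS q n (Pi.single k 1) a = D k k := by simp [SS, lc_single, hD, sq]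
  have hU : UU q n (Pi.single l 1) k a = D l k := by simp [UU, lc_single, hD]
  have hent : ∀ m m' : Fin q, (if m = l ∧ m' = l then μ * c0
       else if m = k ∧ m' = k then -(μ * c0) * (2 + μ * c0)
       else if (m = l ∧ m' = k) ∨ (m = k ∧ m' = l) then Real.sqrt μ * Real.sqrt c0 else 0)
      = (if m = l then (if m' = l then μ * c0 else 0) else 0)
        + (if m = k then (if m' = k then -(μ * c0) * (2 + μ * c0) else 0) else 0)
        + (if m = l then (if m' = k then Real.sqrt μ * Real.sqrt c0 else 0) else 0)
        + (if m = k then (if m' = l then Real.sqrt μ * Real.sqrt c0 else 0) else 0) := by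
    intro m m'
    by_cases h1 : m = l
    · subst h1
      by_cases h2 : m' = l
      · subst h2; simp [hkl.symm]
      · simp [h2, hkl.symm]
    · by_cases h2 : m = k
      · subst h2
        by_cases h3 : m' = k
        · subst h3; simp [hkl]
        · simp [h3, hkl]
      · simp [h1, h2]
  simp_rw [hent]
  change ∑ m, ∑ m', _ * D m m' = _
  rw [hSl, hSk, hU]
  simp_rw [mul_add, add_mul, Finset.sum_add_distrib]
  simp only [mul_ite, ite_mul, mul_zero, zero_mul, Finset.sum_ite_irrel, Finset.sum_const_zero,
    Finset.sum_ite_eq', Finset.mem_univ, if_true]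
  rw [hsym k l]
  ring

/-- unified weight vectors -/
def wv (q : ℕ) (hq : 2 ≤ q) (j : Fin q) : Fin q → ℝ :=
  if (j : ℕ) < q - 1 then omegaVec q j else Pi.single (lI q hq) 1

lemma wv_k (q : ℕ) (hq : 2 ≤ q) (j : Fin q) : wv q hq j (kI q hq) = 0 := by
  unfold wv
  split_ifs
  · simp [omegaVec, kI]
  · simp [Pi.single_apply, kI_ne_lI]

lemma not_lt_iff (q : ℕ) (hq : 2 ≤ q) (j : Fin q) : ¬ ((j : ℕ) < q - 1) ↔ j = lI q hq := by
  simp [lI, Fin.ext_iff]; omega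

lemma sum_split (q : ℕ) (hq : 2 ≤ q) (f : Fin q → ℝ) :
    ∑ j, f j = ∑ j ∈ Finset.univ.filter (fun l : Fin q => (l : ℕ) < q - 1), f j + f (lI q hq) := by
  rw [← Finset.sum_filter_add_sum_filter_not Finset.univ (fun l : Fin q => (l : ℕ) < q - 1)]
  congr 1
  simp_rw [not_lt_iff q hq]
  rw [Finset.filter_eq']; simp

lemma sum_alpha (q i : ℕ) (hi : i + 2 ≤ q) :
    ∑ l ∈ Finset.univ.filter (fun l : Fin q => (l : ℕ) < q - 1), alphaVec q i l = 0 := by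
  unfold alphaVec
  rw [← Finset.mul_sum]
  have h1 : ∑ l ∈ Finset.univ.filter (fun l : Fin q => (l : ℕ) < q - 1),
      (if (l : ℕ) + 1 < i + 1 then (1 : ℝ) else if (l : ℕ) + 1 = i + 1 then -(i : ℝ) else 0) =
      ∑ l ∈ Finset.range q, (if l < q - 1 then
        (if l + 1 < i + 1 then (1 : ℝ) else if l + 1 = i + 1 then -(i : ℝ) else 0) else 0) := by
    rw [Finset.sum_filter, Finset.sum_range]
  have h2 : ∑ l ∈ Finset.range q, (if l < q - 1 then
        (if l + 1 < i + 1 then (1 : ℝ) else if l + 1 = i + 1 then -(i : ℝ) else 0) else 0)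
      = ∑ l ∈ Finset.range (i + 1),
        (if l + 1 < i + 1 then (1 : ℝ) else if l + 1 = i + 1 then -(i : ℝ) else 0) := by
    symm
    apply Finset.sum_subset_zero_on_sdiff
    · intro x; simp; omega
    · intro x hx
      simp at hx
      have a1 : ¬ (x + 1 < i + 1) := by omega
      have a2 : ¬ (x + 1 = i + 1) := by omega
      simp only [a1, a2, if_false, ite_self]
    · intro x hx
      simp at hx
      have : x < q - 1 := by omega
      simp only [this, if_true]
  rw [h1, h2, Finset.sum_range_succ]
  have h3 : ∑ l ∈ Finset.range i,
        (if l + 1 < i + 1 then (1 : ℝ) else if l + 1 = i + 1 then -(i : ℝ) else 0) = i := by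
    rw [Finset.sum_congr rfl (g := fun _ => (1 : ℝ))]
    · simp
    · intro x hx
      simp at hx
      simp [hx]
  rw [h3]; simp

lemma sum_omega (q : ℕ) (m : Fin q) :
    ∑ l ∈ Finset.univ.filter (fun l : Fin q => (l : ℕ) < q - 1), omegaVec q l m = 0 := by
  unfold omegaVec
  by_cases h : (m : ℕ) < q - 2
  · simp only [h, if_true]; exact sum_alpha q _ (by omega)
  · simp [h]

lemma sum_UU (q n : ℕ) (hq : 2 ≤ q) (a : Fin q → Fin n → ℝ) :
    ∑ l ∈ Finset.univ.filter (fun l : Fin q => (l : ℕ) < q - 1),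
      UU q n (wv q hq l) (kI q hq) a = 0 := by
  have : ∀ l ∈ Finset.univ.filter (fun l : Fin q => (l : ℕ) < q - 1),
      UU q n (wv q hq l) (kI q hq) a
        = ∑ m, omegaVec q l m * ∑ i, a m i * a (kI q hq) i := fun l hl => by
    simp at hl
    rw [UU_D]; simp [wv, hl]
  rw [Finset.sum_congr rfl this, Finset.sum_comm]
  refine Finset.sum_eq_zero fun m _ => ?_
  rw [← Finset.sum_mul, sum_omega, zero_mul]

lemma inv_sq_bound (c : ℝ) (hc : 0 ≤ c) :
    0 ≤ 1 - (1 + c)⁻¹ ^ 2 ∧ 1 - (1 + c)⁻¹ ^ 2 ≤ 2 * c := by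
  have h1 : (1 + c)⁻¹ ≤ 1 := inv_le_one_of_one_le₀ (by linarith)
  have h0 : 0 ≤ (1 + c)⁻¹ := by positivity
  have h2 : 1 - c ≤ (1 + c)⁻¹ := by
    rw [← one_div, le_div_iff₀ (by linarith)]; nlinarith
  constructor <;> nlinarith

def cA (q : ℕ) (μ : ℝ) (j : Fin q) : ℝ :=
  if (j : ℕ) < q - 1 then 1
  else (1 + μ * ((q : ℝ) / ((q : ℝ) - 1)))⁻¹ * ((q : ℝ) / ((q : ℝ) - 1))
def cB (q : ℕ) (μ : ℝ) (j : Fin q) : ℝ :=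
  if (j : ℕ) < q - 1 then 0
  else (1 + μ * ((q : ℝ) / ((q : ℝ) - 1)))⁻¹ * ((q : ℝ) / ((q : ℝ) - 1))
          * (2 + μ * ((q : ℝ) / ((q : ℝ) - 1)))
def cC (q : ℕ) (μ : ℝ) (j : Fin q) : ℝ :=
  if (j : ℕ) < q - 1 then 2 * Real.sqrt (1 + μ * ((q : ℝ) / ((q : ℝ) - 1)))
  else 2 * (1 + μ * ((q : ℝ) / ((q : ℝ) - 1)))⁻¹ * Real.sqrt ((q : ℝ) / ((q : ℝ) - 1))

def eF (q n : ℕ) (hq : 2 ≤ q) (μ : ℝ) (a : Fin q → Fin n → ℝ) (j : Fin q) : ℝ :=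
  μ * (cA q μ j * SS q n (wv q hq j) a - cB q μ j * SS q n (Pi.single (kI q hq) 1) a)
def pF (q n : ℕ) (hq : 2 ≤ q) (μ : ℝ) (a : Fin q → Fin n → ℝ) (j : Fin q) : ℝ :=
  Real.sqrt μ * cC q μ j * UU q n (wv q hq j) (kI q hq) a

lemma l_not_lt (q : ℕ) (hq : 2 ≤ q) : ¬ ((lI q hq : ℕ) < q - 1) := by simp [lI]

lemma Zfun_eq (q n : ℕ) (hq : 2 ≤ q) (μ : ℝ) (a : Fin q → Fin n → ℝ) :
    Zfun q n μ a = Zgen q (eF q n hq μ a) (pF q n hq μ a) := by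
  have hq0 : (q : ℝ) ≠ 0 := by exact_mod_cast (by omega : q ≠ 0)
  have h1 : ∀ l ∈ Finset.univ.filter (fun l : Fin q => (l : ℕ) < q - 1),
      Real.exp (-(1 / 2) * quadForm q n (Qmat q μ l) a) =
        Real.exp (-(1 / 2) * (eF q n hq μ a l + pF q n hq μ a l)) := fun l hl => by
    simp at hl
    rw [quadForm_Q q n hq]
    simp only [eF, pF, cA, cB, cC, wv, hl, if_true, mul_div_assoc]
    congr 2; ring
  have h2 : quadForm q n (Pmat q μ) a = eF q n hq μ a (lI q hq) + pF q n hq μ a (lI q hq) := by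
    rw [quadForm_P q n hq]
    simp only [eF, pF, cA, cB, cC, wv, l_not_lt, if_false]
  unfold Zfun Zgen
  rw [Finset.sum_congr rfl h1, h2, Finset.sum_sub_distrib,
    sum_split q hq (fun j => Real.exp (-(1 / 2) * (eF q n hq μ a j + pF q n hq μ a j)))]
  simp
  field_simp
  ring

lemma c0_bounds (q : ℕ) (hq : 2 ≤ q) :
    1 ≤ (q : ℝ) / ((q : ℝ) - 1) ∧ (q : ℝ) / ((q : ℝ) - 1) ≤ 2 := by
  have h : (2 : ℝ) ≤ q := by exact_mod_cast hq
  constructor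
  · rw [le_div_iff₀ (by linarith)]; linarith
  · rw [div_le_iff₀ (by linarith)]; linarith

lemma coef_bounds (q : ℕ) (hq : 2 ≤ q) (μ : ℝ) (h0 : 0 ≤ μ) (h1 : μ ≤ 1 / 2) (j : Fin q) :
    0 ≤ cA q μ j ∧ cA q μ j ≤ 2 ∧ 0 ≤ cB q μ j ∧ cB q μ j ≤ 6 ∧ 0 ≤ cC q μ j ∧ cC q μ j ≤ 4 := by
  obtain ⟨b1, b2⟩ := c0_bounds q hq
  unfold cA cB cC
  set c0 := (q : ℝ) / ((q : ℝ) - 1)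
  have hc : 0 ≤ μ * c0 := by positivity
  have hc1 : μ * c0 ≤ 1 := by nlinarith
  have hi0 : 0 ≤ (1 + μ * c0)⁻¹ := by positivity
  have hi1 : (1 + μ * c0)⁻¹ ≤ 1 := inv_le_one_of_one_le₀ (by linarith)
  have hr : Real.sqrt (1 + μ * c0) ≤ 2 := Real.sqrt_le_iff.2 ⟨by norm_num, by linarith⟩
  have hr2 : Real.sqrt c0 ≤ 2 := Real.sqrt_le_iff.2 ⟨by norm_num, by linarith⟩
  have hr0 := Real.sqrt_nonneg (1 + μ * c0)
  have hr20 := Real.sqrt_nonneg c0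
  have hA : (1 + μ * c0)⁻¹ * c0 ≤ 2 := by nlinarith
  have hA0 : 0 ≤ (1 + μ * c0)⁻¹ * c0 := by positivity
  split_ifs
  · exact ⟨by norm_num, by norm_num, by norm_num, by norm_num, by linarith, by linarith⟩
  · exact ⟨hA0, hA, by positivity, by nlinarith, by positivity, by nlinarith⟩

/-- total weight -/
def Wt (q : ℕ) (hq : 2 ≤ q) : ℝ := ∑ j, ∑ m, wv q hq j m ^ 2

lemma w_le (q : ℕ) (hq : 2 ≤ q) (j : Fin q) : ∑ m, wv q hq j m ^ 2 ≤ Wt q hq :=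
  Finset.single_le_sum (f := fun j => ∑ m, wv q hq j m ^ 2)
    (fun _ _ => Finset.sum_nonneg fun _ _ => sq_nonneg _) (Finset.mem_univ j)

lemma w_nonneg (q : ℕ) (hq : 2 ≤ q) (j : Fin q) : 0 ≤ ∑ m, wv q hq j m ^ 2 :=
  Finset.sum_nonneg fun _ _ => sq_nonneg _

lemma W_nonneg (q : ℕ) (hq : 2 ≤ q) : 0 ≤ Wt q hq :=
  Finset.sum_nonneg fun j _ => w_nonneg q hq j

lemma eF_le (q n : ℕ) (hq : 2 ≤ q) (μ : ℝ) (h0 : 0 ≤ μ) (h1 : μ ≤ 1 / 2)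
    (a : Fin q → Fin n → ℝ) (j : Fin q) :
    |eF q n hq μ a j| ≤ 2 * (μ * ((Wt q hq + 3) * Nsq q n a)) := by
  obtain ⟨a0, a1, b0, b1, -, -⟩ := coef_bounds q hq μ h0 h1 j
  have hN := Nsq_nonneg q n a
  have s1 : SS q n (wv q hq j) a ≤ Wt q hq * Nsq q n a :=
    (SS_le q n _ a).trans (mul_le_mul_of_nonneg_right (w_le q hq j) hN)
  have s2 : SS q n (Pi.single (kI q hq) 1) a ≤ Nsq q n a := by
    have := SS_le q n (Pi.single (kI q hq) 1) a
    simpa [Pi.single_apply] using this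
  have p1 := SS_nonneg q n (wv q hq j) a
  have p2 := SS_nonneg q n (Pi.single (kI q hq) 1) a
  unfold eF
  rw [abs_mul, abs_of_nonneg h0]
  have m1 := mul_le_mul a1 s1 p1 (by norm_num)
  have m2 := mul_le_mul b1 s2 p2 (by norm_num)
  have n1 := mul_nonneg a0 p1
  have n2 := mul_nonneg b0 p2
  have hWN := mul_nonneg (W_nonneg q hq) hN
  have : |cA q μ j * SS q n (wv q hq j) a - cB q μ j * SS q n (Pi.single (kI q hq) 1) a|
      ≤ 2 * ((Wt q hq + 3) * Nsq q n a) := by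
    rw [abs_le]; constructor <;> nlinarith
  calc _ ≤ μ * (2 * ((Wt q hq + 3) * Nsq q n a)) := by gcongr
    _ = _ := by ring

lemma pF_le (q n : ℕ) (hq : 2 ≤ q) (μ : ℝ) (h0 : 0 ≤ μ) (h1 : μ ≤ 1 / 2)
    (a : Fin q → Fin n → ℝ) (j : Fin q) :
    |pF q n hq μ a j| ≤ 2 * (Real.sqrt μ * ((Wt q hq + 3) * Nsq q n a)) := by
  obtain ⟨-, -, -, -, c0, c1⟩ := coef_bounds q hq μ h0 h1 j
  have hN := Nsq_nonneg q n a
  have u := UU_le q n (wv q hq j) (kI q hq) a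
  have hw := w_le q hq j
  have hw0 := w_nonneg q hq j
  unfold pF
  rw [abs_mul, abs_mul, abs_of_nonneg (Real.sqrt_nonneg μ), abs_of_nonneg c0]
  calc _ ≤ Real.sqrt μ * 4 * (((∑ m, wv q hq j m ^ 2) + 1) / 2 * Nsq q n a) := by gcongr
    _ ≤ Real.sqrt μ * 4 * ((Wt q hq + 3) / 2 * Nsq q n a) := by gcongr; norm_num
    _ = _ := by ring

lemma flip_eF (q n : ℕ) (hq : 2 ≤ q) (μ : ℝ) (a : Fin q → Fin n → ℝ) :
    eF q n hq μ (flipk q n (kI q hq) a) = eF q n hq μ a := by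
  funext j
  unfold eF
  rw [SS_flip q n _ _ (wv_k q hq j), SS_flip_single]

lemma flip_pF (q n : ℕ) (hq : 2 ≤ q) (μ : ℝ) (a : Fin q → Fin n → ℝ) :
    pF q n hq μ (flipk q n (kI q hq) a) = - pF q n hq μ a := by
  funext j
  unfold pF
  rw [UU_flip q n _ _ (wv_k q hq j), Pi.neg_apply]; ring

lemma continuous_eF (q n : ℕ) (hq : 2 ≤ q) (μ : ℝ) (j : Fin q) :
    Continuous fun a => eF q n hq μ a j := by
  unfold eF
  have h1 := continuous_SS q n (wv q hq j)
  have h2 := continuous_SS q n (Pi.single (kI q hq) 1)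
  fun_prop

lemma continuous_pF (q n : ℕ) (hq : 2 ≤ q) (μ : ℝ) (j : Fin q) :
    Continuous fun a => pF q n hq μ a j := by
  unfold pF
  have h1 := continuous_UU q n (wv q hq j) (kI q hq)
  fun_prop

lemma continuous_Zf (q n : ℕ) (hq : 2 ≤ q) (μ : ℝ) : Continuous (Zfun q n μ) := by
  have : Zfun q n μ = fun a => Zgen q (eF q n hq μ a) (pF q n hq μ a) :=
    funext (Zfun_eq q n hq μ)
  rw [this]
  unfold Zgen
  have h1 := continuous_eF q n hq μ
  have h2 := continuous_pF q n hq μ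
  fun_prop

/-- main terms -/
def G1 (q n : ℕ) (hq : 2 ≤ q) (μ : ℝ) (a : Fin q → Fin n → ℝ) : ℝ :=
  (1 / (q : ℝ)) * ∑ j, (eF q n hq μ a j / 2 - pF q n hq μ a j ^ 2 / 8)
def G2 (q n : ℕ) (hq : 2 ≤ q) (μ : ℝ) (a : Fin q → Fin n → ℝ) : ℝ :=
  ((1 / (q : ℝ)) * ∑ j, pF q n hq μ a j / 2) ^ 2

lemma int_compare (q n : ℕ) (k : Fin q) (F G : (Fin q → Fin n → ℝ) → ℝ) (C : ℝ)
    (hF : Continuous F) (iF : Integrable F (stdGaussPi q n)) (iG : Integrable G (stdGaussPi q n))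
    (h : ∀ a, |(F a + F (flipk q n k a)) / 2 - G a| ≤ C * Real.exp (Nsq q n a / 4)) :
    |∫ a, F a ∂(stdGaussPi q n) - ∫ a, G a ∂(stdGaussPi q n)|
      ≤ C * ∫ a, Real.exp (Nsq q n a / 4) ∂(stdGaussPi q n) := by
  have iF' : Integrable (fun a => F (flipk q n k a)) (stdGaussPi q n) :=
    (mp_flip q n k).integrable_comp_of_integrable iF
  have e : ∫ a, F a ∂(stdGaussPi q n) - ∫ a, G a ∂(stdGaussPi q n)
      = ∫ a, ((F a + F (flipk q n k a)) / 2 - G a) ∂(stdGaussPi q n) := by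
    have i2 : Integrable (fun a => (F a + F (flipk q n k a)) / 2) (stdGaussPi q n) :=
      (iF.add iF').div_const 2
    rw [integral_sub i2 iG, integral_div, integral_add iF iF',
      integral_flip q n k F hF]
    ring
  rw [e, ← integral_const_mul]
  rw [← Real.norm_eq_abs]
  refine norm_integral_le_of_norm_le ((integrable_exp_Nsq q n).const_mul C)
    (Filter.Eventually.of_forall fun a => ?_)
  rw [Real.norm_eq_abs]
  exact h a

lemma main_bounds (q n : ℕ) (hq : 2 ≤ q) (μ : ℝ) (h0 : 0 ≤ μ)
    (h1 : Real.sqrt μ * (Wt q hq + 3) ≤ 1 / 64) :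
    |∫ a, Zfun q n μ a ∂(stdGaussPi q n) - ∫ a, G1 q n hq μ a ∂(stdGaussPi q n)|
      ≤ 40 * μ ^ 2 * (64 * (Wt q hq + 3)) ^ 10 * ∫ a, Real.exp (Nsq q n a / 4) ∂(stdGaussPi q n) ∧
    |∫ a, Zfun q n μ a ^ 2 ∂(stdGaussPi q n) - ∫ a, G2 q n hq μ a ∂(stdGaussPi q n)|
      ≤ 40 * μ ^ 2 * (64 * (Wt q hq + 3)) ^ 10 * ∫ a, Real.exp (Nsq q n a / 4) ∂(stdGaussPi q n) := by
  have hW := W_nonneg q hq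
  set K := Wt q hq + 3 with hK
  have hK3 : 3 ≤ K := by linarith
  set s := Real.sqrt μ with hs
  have hs0 : 0 ≤ s := Real.sqrt_nonneg μ
  have hs2 : s ^ 2 = μ := Real.sq_sqrt h0
  have hs64 : s ≤ 1 / 64 := by nlinarith
  have hs1 : s ≤ 1 := by linarith
  have hμ : μ ≤ 1 / 2 := by nlinarith
  have hμs : μ ≤ s := by nlinarith
  set B : (Fin q → Fin n → ℝ) → ℝ := fun a => 64 * K * Real.exp (Nsq q n a / 64) with hB
  have hE1 : ∀ a, 1 ≤ Real.exp (Nsq q n a / 64) := fun a =>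
    Real.one_le_exp (by have := Nsq_nonneg q n a; positivity)
  have hBE : ∀ a, Real.exp (Nsq q n a / 64) ≤ B a := fun a => by
    simp only [hB]; nlinarith [hE1 a]
  have hB1 : ∀ a, 1 ≤ B a := fun a => (hE1 a).trans (hBE a)
  have hKN : ∀ a, K * Nsq q n a ≤ B a := fun a => by
    have := Real.add_one_le_exp (Nsq q n a / 64)
    simp only [hB]; nlinarith
  have hB10 : ∀ a, B a ^ 10 ≤ (64 * K) ^ 10 * Real.exp (Nsq q n a / 4) := fun a => by
    simp only [hB]
    rw [mul_pow, ← Real.exp_nat_mul]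
    gcongr
    have := Nsq_nonneg q n a
    push_cast; linarith
  have key := fun a => Zgen_bounds q hq (eF q n hq μ a) (pF q n hq μ a) s (B a) hs0 hs1 (hB1 a)
    (fun j => (eF_le q n hq μ h0 hμ a j).trans (by
      rw [hs2]; gcongr; exact hKN a))
    (fun j => (pF_le q n hq μ h0 hμ a j).trans (by gcongr; exact hKN a))
    (fun j => (Real.exp_le_exp.2 (by
      have := eF_le q n hq μ h0 hμ a j
      rw [abs_div, abs_of_pos (by norm_num : (0 : ℝ) < 2)]
      have hKN0 : 0 ≤ K * Nsq q n a := by have := Nsq_nonneg q n a; positivity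
      have h2 : μ * (K * Nsq q n a) ≤ s * (K * Nsq q n a) := by gcongr
      have h3 : s * K * Nsq q n a ≤ 1 / 64 * Nsq q n a := by
        gcongr; exact Nsq_nonneg q n a
      linarith)).trans (hBE a))
    (fun j => (Real.exp_le_exp.2 (by
      have := pF_le q n hq μ h0 hμ a j
      rw [abs_div, abs_of_pos (by norm_num : (0 : ℝ) < 2)]
      have h3 : s * K * Nsq q n a ≤ 1 / 64 * Nsq q n a := by
        gcongr; exact Nsq_nonneg q n a
      linarith)).trans (hBE a))
  have cE := continuous_eF q n hq μ
  have cP := continuous_pF q n hq μ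
  have cZ := continuous_Zf q n hq μ
  have hs4 : s ^ 4 = μ ^ 2 := by rw [← hs2]; ring
  have zz : ∀ a, Zfun q n μ (flipk q n (kI q hq) a) = Zgen q (eF q n hq μ a) (-pF q n hq μ a) :=
    fun a => by rw [Zfun_eq q n hq, flip_eF, flip_pF]
  have dom : ∀ (c x : ℝ) (a : Fin q → Fin n → ℝ), 0 ≤ c → x ≤ c * B a ^ 10 →
      x ≤ c * (64 * K) ^ 10 * Real.exp (Nsq q n a / 4) := fun c x a hc hx => by
    rw [mul_assoc]; exact hx.trans (mul_le_mul_of_nonneg_left (hB10 a) hc)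
  constructor
  · refine int_compare q n (kI q hq) _ _ _ cZ ?_ ?_ ?_
    · refine integrable_of_dom q n _ cZ (2 * (64 * K) ^ 10) fun a => dom 2 _ a (by norm_num) ?_
      rw [Zfun_eq q n hq]; exact (key a).2.2.2.2.1
    · refine integrable_of_dom q n _ (by unfold G1; fun_prop) (2 * (64 * K) ^ 10)
        fun a => dom 2 _ a (by norm_num) (key a).2.2.1
    · intro a
      refine dom _ _ a (by positivity) ?_
      rw [zz, Zfun_eq q n hq]
      refine (key a).1.trans ?_
      rw [hs4]
      have hp : B a ^ 5 ≤ B a ^ 10 := pow_le_pow_right₀ (hB1 a) (by norm_num)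
      have hB0 : 0 ≤ B a ^ 5 := by have := hB1 a; positivity
      have : μ ^ 2 * B a ^ 5 ≤ μ ^ 2 * B a ^ 10 := by gcongr μ ^ 2 * ?_
      have h5 : 0 ≤ μ ^ 2 * B a ^ 5 := by positivity
      linarith
  · refine int_compare q n (kI q hq) (fun a => Zfun q n μ a ^ 2) _ _ (by fun_prop) ?_ ?_ ?_
    · refine integrable_of_dom q n _ (by fun_prop) (4 * (64 * K) ^ 10)
        fun a => dom 4 _ a (by norm_num) ?_
      rw [Zfun_eq q n hq]; exact (key a).2.2.2.2.2
    · refine integrable_of_dom q n _ (by unfold G2; fun_prop) (1 * (64 * K) ^ 10)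
        fun a => dom 1 _ a (by norm_num) ?_
      rw [one_mul]; exact (key a).2.2.2.1
    · intro a
      refine dom _ _ a (by positivity) ?_
      simp only [zz, Zfun_eq q n hq]
      rw [← hs4]
      exact (key a).2.1

lemma integral_G1 (q n : ℕ) (hq : 2 ≤ q) (μ : ℝ) (h0 : 0 ≤ μ) :
    ∫ a, G1 q n hq μ a ∂(stdGaussPi q n) = (1 / (q : ℝ)) * ∑ j,
      (μ * (cA q μ j * (n * ∑ m, wv q hq j m ^ 2) - cB q μ j * n) / 2
        - μ * cC q μ j ^ 2 * (n * ∑ m, wv q hq j m ^ 2) / 8) := by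
  unfold G1
  have ie : ∀ j, Integrable (fun a => eF q n hq μ a j / 2) (stdGaussPi q n) := fun j =>
    ((((integrable_SS q n (wv q hq j)).const_mul _).sub
      ((integrable_SS q n (Pi.single (kI q hq) 1)).const_mul _)).const_mul μ).div_const 2
  have hp : ∀ j a, pF q n hq μ a j ^ 2 / 8
      = (μ * cC q μ j ^ 2 / 8) * UU q n (wv q hq j) (kI q hq) a ^ 2 := fun j a => by
    unfold pF
    rw [mul_pow, mul_pow, Real.sq_sqrt h0]; ring
  have ip : ∀ j, Integrable (fun a => pF q n hq μ a j ^ 2 / 8) (stdGaussPi q n) := fun j => by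
    simp_rw [hp]
    exact (integrable_UU_sq q n _ _).const_mul _
  have iep : ∀ j, Integrable (fun a => eF q n hq μ a j / 2 - pF q n hq μ a j ^ 2 / 8)
      (stdGaussPi q n) := fun j => (ie j).sub (ip j)
  rw [integral_const_mul, integral_finsetSum _ fun j _ => iep j]
  congr 1
  refine Finset.sum_congr rfl fun j _ => ?_
  rw [integral_sub (ie j) (ip j)]
  simp_rw [hp]
  rw [integral_const_mul, integral_UU_sq q n _ _ (wv_k q hq j)]
  unfold eF
  rw [integral_div, integral_const_mul, integral_sub ((integrable_SS q n (wv q hq j)).const_mul _)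
      ((integrable_SS q n (Pi.single (kI q hq) 1)).const_mul _), integral_const_mul,
      integral_const_mul, integral_SS, integral_SS]
  simp [Pi.single_apply]
  ring

lemma w_last (q : ℕ) (hq : 2 ≤ q) : ∑ m, wv q hq (lI q hq) m ^ 2 = 1 := by
  simp [wv, l_not_lt, Pi.single_apply]

lemma integral_G2 (q n : ℕ) (hq : 2 ≤ q) (μ : ℝ) (h0 : 0 ≤ μ) :
    ∫ a, G2 q n hq μ a ∂(stdGaussPi q n) =
      (1 / (q : ℝ)) ^ 2 * (μ * cC q μ (lI q hq) ^ 2 * n / 4) := by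
  have : ∀ a, G2 q n hq μ a = ((1 / (q : ℝ)) ^ 2 * (μ * cC q μ (lI q hq) ^ 2 / 4)) *
      UU q n (wv q hq (lI q hq)) (kI q hq) a ^ 2 := fun a => by
    unfold G2
    rw [sum_split q hq]
    have hz : ∑ j ∈ Finset.univ.filter (fun l : Fin q => (l : ℕ) < q - 1), pF q n hq μ a j / 2
        = 0 := by
      have : ∀ j ∈ Finset.univ.filter (fun l : Fin q => (l : ℕ) < q - 1), pF q n hq μ a j / 2
          = (Real.sqrt μ * (2 * Real.sqrt (1 + μ * ((q : ℝ) / ((q : ℝ) - 1)))) / 2) *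
            UU q n (wv q hq j) (kI q hq) a := fun j hj => by
        simp at hj
        simp only [pF, cC, hj, if_true]; ring
      rw [Finset.sum_congr rfl this, ← Finset.mul_sum, sum_UU, mul_zero]
    rw [hz, zero_add]
    unfold pF
    have hsq : Real.sqrt μ ^ 2 = μ := Real.sq_sqrt h0
    conv_rhs => rw [← hsq]
    rw [hsq]
    ring_nf
    rw [hsq]
    ring
  simp_rw [this]
  rw [integral_const_mul, integral_UU_sq q n _ _ (wv_k q hq _), w_last]
  ring

lemma G1_close (q n : ℕ) (hq : 2 ≤ q) (μ : ℝ) (h0 : 0 ≤ μ) :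
    |∫ a, G1 q n hq μ a ∂(stdGaussPi q n) + (n : ℝ) * μ / ((q : ℝ) - 1)|
      ≤ n * (Wt q hq + 4) * μ ^ 2 := by
  obtain ⟨b1, b2⟩ := c0_bounds q hq
  have hq2 : (2 : ℝ) ≤ q := by exact_mod_cast hq
  have hW := W_nonneg q hq
  have e : (n : ℝ) * μ / ((q : ℝ) - 1) = (1 / (q : ℝ)) * ∑ j : Fin q,
      (if j = lI q hq then n * μ * ((q : ℝ) / ((q : ℝ) - 1)) else 0) := by
    have h1 : (q : ℝ) - 1 ≠ 0 := by linarith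
    have h2 : (q : ℝ) ≠ 0 := by linarith
    simp
    field_simp
  rw [integral_G1 q n hq μ h0, e, ← mul_add, ← Finset.sum_add_distrib]
  refine avg_abs_le q hq _ _ fun j => ?_
  set c0 := (q : ℝ) / ((q : ℝ) - 1) with hc0
  have hc : 0 ≤ μ * c0 := by positivity
  by_cases hj : (j : ℕ) < q - 1
  · have hne : j ≠ lI q hq := fun h => l_not_lt q hq (h ▸ hj)
    simp only [cA, cB, cC, hj, hne, if_true, if_false]
    rw [← hc0, mul_pow, Real.sq_sqrt (by linarith)]
    have hw := w_le q hq j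
    have hw0 := w_nonneg q hq j
    set w := ∑ m, wv q hq j m ^ 2
    rw [show μ * (1 * (n * w) - 0 * n) / 2 - μ * (2 ^ 2 * (1 + μ * c0)) * (n * w) / 8 + 0
      = -(n * (w * c0 / 2) * μ ^ 2) by ring, abs_neg, abs_of_nonneg (by positivity)]
    gcongr
    nlinarith
  · have hjl := (not_lt_iff q hq j).1 hj
    subst hjl
    simp only [cA, cB, cC, l_not_lt, if_true, if_false, w_last]
    rw [← hc0, mul_pow, mul_pow, Real.sq_sqrt (by linarith)]
    have hne : 1 + μ * c0 ≠ 0 := by positivity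
    rw [show μ * ((1 + μ * c0)⁻¹ * c0 * (n * 1) - (1 + μ * c0)⁻¹ * c0 * (2 + μ * c0) * n) / 2
        - μ * (2 ^ 2 * (1 + μ * c0)⁻¹ ^ 2 * c0) * (n * 1) / 8 + n * μ * c0
        = n * (c0 / 2) * μ * (1 - (1 + μ * c0)⁻¹ ^ 2) by field_simp; ring]
    obtain ⟨g0, g1⟩ := inv_sq_bound (μ * c0) hc
    rw [abs_of_nonneg (by positivity)]
    calc _ ≤ n * (c0 / 2) * μ * (2 * (μ * c0)) := by gcongr
      _ = n * (c0 ^ 2) * μ ^ 2 := by ring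
      _ ≤ n * (Wt q hq + 4) * μ ^ 2 := by gcongr; nlinarith

lemma G2_close (q n : ℕ) (hq : 2 ≤ q) (μ : ℝ) (h0 : 0 ≤ μ) :
    |(1 / 2) * ∫ a, G2 q n hq μ a ∂(stdGaussPi q n)
        - ((n : ℝ) / 2) * μ / ((q : ℝ) * ((q : ℝ) - 1))|
      ≤ n * (Wt q hq + 4) * μ ^ 2 := by
  obtain ⟨b1, b2⟩ := c0_bounds q hq
  have hq2 : (2 : ℝ) ≤ q := by exact_mod_cast hq
  have hW := W_nonneg q hq
  have e : ((n : ℝ) / 2) * μ / ((q : ℝ) * ((q : ℝ) - 1))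
      = (1 / (q : ℝ)) ^ 2 * (n / 2 * μ * ((q : ℝ) / ((q : ℝ) - 1))) := by
    have h1 : (q : ℝ) - 1 ≠ 0 := by linarith
    have h2 : (q : ℝ) ≠ 0 := by linarith
    field_simp
  rw [integral_G2 q n hq μ h0, e]
  set c0 := (q : ℝ) / ((q : ℝ) - 1) with hc0
  have hc : 0 ≤ μ * c0 := by positivity
  simp only [cC, l_not_lt, if_false]
  rw [← hc0, mul_pow, mul_pow, Real.sq_sqrt (by linarith)]
  rw [show 1 / 2 * ((1 / (q : ℝ)) ^ 2 * (μ * (2 ^ 2 * (1 + μ * c0)⁻¹ ^ 2 * c0) * n / 4))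
      - (1 / (q : ℝ)) ^ 2 * (n / 2 * μ * c0)
      = -((1 / (q : ℝ)) ^ 2 * (n * (c0 / 2) * μ * (1 - (1 + μ * c0)⁻¹ ^ 2))) by ring, abs_neg]
  obtain ⟨g0, g1⟩ := inv_sq_bound (μ * c0) hc
  have hq1 : (1 / (q : ℝ)) ^ 2 ≤ 1 := by
    refine pow_le_one₀ (by positivity) ?_
    rw [div_le_one (by linarith)]; linarith
  rw [abs_of_nonneg (by positivity)]
  calc _ ≤ 1 * (n * (c0 / 2) * μ * (2 * (μ * c0))) := by gcongr
    _ = n * (c0 ^ 2) * μ ^ 2 := by ring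
    _ ≤ n * (Wt q hq + 4) * μ ^ 2 := by gcongr; nlinarith

/-- Corollary 5 of the paper.
Regarding `𝒵_1` and `𝒵_2` as functions of `μ` (with `q, n` fixed), there are
constants `C > 0` and `δ ∈ (0,1)` such that for all `μ ∈ (0,δ)`:
`|𝒵_1 + nμ/(q−1)| ≤ Cμ²` and `|𝒵_2 − (n/2)μ/(q(q−1))| ≤ Cμ²`. -/
theorem calZ_one_two_leading_order
    (q n : ℕ) (hq : 2 ≤ q) (hn : 1 ≤ n) :
    ∃ C > (0 : ℝ), ∃ δ ∈ Set.Ioo (0 : ℝ) 1, ∀ μ ∈ Set.Ioo (0 : ℝ) δ,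
      |calZ q n μ 1 + (n : ℝ) * μ / ((q : ℝ) - 1)| ≤ C * μ ^ 2 ∧
      |calZ q n μ 2 - ((n : ℝ) / 2) * μ / ((q : ℝ) * ((q : ℝ) - 1))| ≤ C * μ ^ 2 := by
  have hW := W_nonneg q hq
  set K := Wt q hq + 3 with hK
  have hK3 : 3 ≤ K := by linarith
  set I := ∫ a, Real.exp (Nsq q n a / 4) ∂(stdGaussPi q n) with hI
  have hI0 : 0 ≤ I := integral_nonneg fun a => (Real.exp_pos _).le
  have hn0 : (0 : ℝ) ≤ n := by positivity
  refine ⟨40 * (64 * K) ^ 10 * I + n * (Wt q hq + 4) + 1, by positivity,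
    (1 / (64 * K)) ^ 2, ⟨by positivity, ?_⟩, ?_⟩
  · refine pow_lt_one₀ (by positivity) ?_ (by norm_num)
    rw [div_lt_one (by positivity)]; linarith
  · rintro μ ⟨hμ0, hμ1⟩
    have hs : Real.sqrt μ * K ≤ 1 / 64 := by
      have : Real.sqrt μ ≤ 1 / (64 * K) := by
        rw [Real.sqrt_le_iff]; exact ⟨by positivity, hμ1.le⟩
      calc _ ≤ 1 / (64 * K) * K := by gcongr
        _ = 1 / 64 := by field_simp
    obtain ⟨m1, m2⟩ := main_bounds q n hq μ hμ0.le hs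
    have g1 := G1_close q n hq μ hμ0.le
    have g2 := G2_close q n hq μ hμ0.le
    have hμ2 : 0 ≤ μ ^ 2 := sq_nonneg μ
    rw [← hK, ← hI] at m1 m2
    have hX : 0 ≤ 40 * μ ^ 2 * (64 * K) ^ 10 * I := by positivity
    have e1 : calZ q n μ 1 = ∫ a, Zfun q n μ a ∂(stdGaussPi q n) := by simp [calZ]
    have e2 : calZ q n μ 2 = (1 / 2) * ∫ a, Zfun q n μ a ^ 2 ∂(stdGaussPi q n) := by simp [calZ]
    rw [e1, e2]
    constructor
    · rw [abs_le] at *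
      constructor <;> nlinarith
    · rw [abs_le] at *
      constructor <;> nlinarith

end
end
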